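/- arXiv:1911.11402 — 5 statements merged into one kernel-verified Lean document; each statement's English description precedes it below -/
import Mathlib

section
/- Let 1/3 < λ < 1, g ∈ C^λ₀([0,1];ℝ), ξ ∈ ℝ, b ∈ C_b¹(ℝ;ℝ) and σ ∈ C_b²(ℝ;ℝ). Then the Doss–Sussmann function x_t(ξ,g) = φ(a_t,g_t) satisfies: for every t ∈ [0,1] the Russo–Vallois symmetric integral ∫₀^t σ(x_u) d°g_u exists and x_t = ξ + ∫₀^t b(x_u) du + ∫₀^t σ(x_u) d°g_u. Moreover x is the unique solution of this equation in the class 𝔠 of all λ-Hölder continuous functions y : [0,1] → ℝ for which there exist a function f : ℝ² → ℝ that is continuously differentiable in the first variable and three times continuously differentiable in the second variable (with all these partial derivatives continuous) and a Lipschitz function k : [0,1] → ℝ such that y_t = f(k_t,g_t) for all t ∈ [0,1]. -/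
/-- The Russo–Vallois symmetric integral `∫₀ᵗ f dᵒg = I`. -/
def HasSymmInt (f g : ℝ → ℝ) (t : ℝ) (I : ℝ) : Prop :=
  Filter.Tendsto
    (fun ε : ℝ =>
      ∫ u in (0:ℝ)..t, ((f (min (u + ε) t) + f u) / 2) * ((g (min (u + ε) t) - g u) / ε))
    (nhdsWithin 0 (Set.Ioi 0)) (nhds I)

/-- `f` is in `C_b^n(ℝ;ℝ)`: `n`-times continuously differentiable, bounded together with all
its derivatives. -/
def CbN (n : ℕ) (f : ℝ → ℝ) : Prop :=
  ContDiff ℝ n f ∧ ∀ i ≤ n, ∃ M : ℝ, ∀ x : ℝ, |iteratedDeriv i f x| ≤ M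

/-- `f ∈ C^{1,3}(ℝ²;ℝ)`: continuously differentiable in the first variable, three times
continuously differentiable in the second, with all these partial derivatives continuous. -/
def IsC13 (f : ℝ → ℝ → ℝ) : Prop :=
  (∀ y : ℝ, Differentiable ℝ (fun x => f x y)) ∧
  (∀ x : ℝ, ContDiff ℝ 3 (f x)) ∧
  Continuous (fun p : ℝ × ℝ => f p.1 p.2) ∧
  Continuous (fun p : ℝ × ℝ => deriv (fun x => f x p.2) p.1) ∧
  Continuous (fun p : ℝ × ℝ => deriv (f p.1) p.2) ∧
  Continuous (fun p : ℝ × ℝ => deriv (deriv (f p.1)) p.2) ∧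
  Continuous (fun p : ℝ × ℝ => deriv (deriv (deriv (f p.1))) p.2)

/-- Membership in the class `𝔠` of solutions: `λ`-Hölder on `[0,1]` and of the form
`y_t = f(k_t, g_t)` with `f ∈ C^{1,3}` and `k` Lipschitz. -/
def InClassC (lam : ℝ) (g y : ℝ → ℝ) : Prop :=
  (∃ Cy : ℝ, ∀ s ∈ Set.Icc (0:ℝ) 1, ∀ t ∈ Set.Icc (0:ℝ) 1, |y t - y s| ≤ Cy * |t - s| ^ lam) ∧
  ∃ f : ℝ → ℝ → ℝ, ∃ k : ℝ → ℝ, ∃ K : NNReal,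
    IsC13 f ∧ LipschitzOnWith K k (Set.Icc 0 1) ∧ ∀ t ∈ Set.Icc (0:ℝ) 1, y t = f (k t) (g t)

/-- `f_{σ,b}(x,y) = exp(−∫₀^y σ'(φ(x,η))dη) · b(φ(x,y))`. -/
noncomputable def fsb (b σ : ℝ → ℝ) (φ : ℝ → ℝ → ℝ) (x y : ℝ) : ℝ :=
  Real.exp (-(∫ η in (0:ℝ)..y, deriv σ (φ x η))) * b (φ x y)

section

open Set Filter Topology MeasureTheory intervalIntegral

/-- The mean `∫₀¹ f'(x + θ (y - x)) dθ` of `f'` over the segment from `x` to `y`. -/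
noncomputable def segMean (f' : ℝ → ℝ) (x y : ℝ) : ℝ :=
  ∫ θ in (0:ℝ)..1, f' (x + θ * (y - x))

lemma segMean_self (f' : ℝ → ℝ) (x : ℝ) : segMean f' x x = f' x := by
  simp [segMean]

lemma continuous_segMean {F1 : ℝ → ℝ → ℝ} (hF : Continuous fun p : ℝ × ℝ => F1 p.1 p.2) :
    Continuous fun p : ℝ × ℝ × ℝ => segMean (fun x => F1 x p.2.2) p.1 p.2.1 := by
  unfold segMean
  apply continuous_parametric_intervalIntegral_of_continuous'
  exact hF.comp (f := fun q : (ℝ × ℝ × ℝ) × ℝ =>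
    (q.1.1 + q.2 * (q.1.2.1 - q.1.1), q.1.2.2)) (by fun_prop)

lemma sub_eq_segMean_mul {f f' : ℝ → ℝ} (hf : ∀ x, HasDerivAt f (f' x) x) (hc : Continuous f')
    (x y : ℝ) : f y - f x = segMean f' x y * (y - x) := by
  have hd : ∀ θ ∈ uIcc (0:ℝ) 1,
      HasDerivAt (fun θ => f (x + θ * (y - x))) (f' (x + θ * (y - x)) * (y - x)) θ := by
    intro θ _
    have h : HasDerivAt (fun θ : ℝ => x + θ * (y - x)) (y - x) θ := by
      simpa using ((hasDerivAt_id θ).mul_const (y - x)).const_add x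
    exact (hf _).comp θ h
  have h := integral_eq_sub_of_hasDerivAt hd
    (Continuous.intervalIntegrable (by fun_prop) _ _)
  rw [intervalIntegral.integral_mul_const] at h
  simpa [segMean] using h.symm

lemma abs_segMean_le {f' : ℝ → ℝ} {M : ℝ} (hM : ∀ x, |f' x| ≤ M) (x y : ℝ) :
    |segMean f' x y| ≤ M := by
  have := norm_integral_le_of_norm_le_const (a := 0) (b := 1)
    (f := fun θ : ℝ => f' (x + θ * (y - x))) (C := M) (fun θ _ => hM _)
  simpa [segMean] using this

/-- A solution of an integral equation with bounded continuous coefficient is continuous, even if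
the integrand is not assumed measurable a priori. -/
lemma continuous_of_integral_eq {σ x : ℝ → ℝ} {α M : ℝ} (hσ : Continuous σ)
    (hM : ∀ v, |σ v| ≤ M) (hx : ∀ β, x β = α + ∫ η in (0:ℝ)..β, σ (x η)) : Continuous x := by
  set S : Set ℝ := {β | IntervalIntegrable (fun η => σ (x η)) volume 0 β} with hS
  have hord : S.OrdConnected := by
    rw [ordConnected_iff_uIcc_subset]
    intro c hc d hd e he
    have h1 : IntervalIntegrable (fun η => σ (x η)) volume c d := hc.symm.trans hd
    exact hc.trans (h1.mono_set (uIcc_subset_uIcc left_mem_uIcc he))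
  have hxS : ContinuousOn x S := by
    have hl : LipschitzOnWith M.toNNReal x S := by
      apply LipschitzOnWith.of_dist_le_mul
      intro c hc d hd
      rw [hx c, hx d, Real.dist_eq]
      have h1 : (α + ∫ η in (0:ℝ)..c, σ (x η)) - (α + ∫ η in (0:ℝ)..d, σ (x η))
          = ∫ η in d..c, σ (x η) := by
        rw [← integral_interval_sub_left hc hd]; ring
      rw [h1, Real.dist_eq]
      refine (intervalIntegral.norm_integral_le_of_norm_le_const (f := fun η => σ (x η)) (C := M)
        fun η _ => ?_).trans ?_
      · exact hM (x η)
      gcongr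
      exact Real.le_coe_toNNReal M
    exact hl.continuousOn
  have hxm : Measurable x := by
    classical
    have : x = S.piecewise x (fun _ => α) := by
      ext β
      by_cases hβ : β ∈ S
      · simp [hβ]
      · simp only [hβ, not_false_eq_true, piecewise_eq_of_notMem]
        rw [hx β, integral_undef hβ, add_zero]
    rw [this]
    exact hxS.measurable_piecewise continuousOn_const hord.measurableSet
  have hintegral : ∀ c d, IntervalIntegrable (fun η => σ (x η)) volume c d := by
    intro c d
    rw [intervalIntegrable_iff]
    refine Measure.integrableOn_of_bounded (M := M) (by simp)
      (hσ.measurable.comp hxm).aestronglyMeasurable (ae_of_all _ fun η => hM _)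
  rw [funext hx]
  exact continuous_const.add (continuous_primitive hintegral 0)

lemma hasDerivAt_of_integral_eq {σ x : ℝ → ℝ} {α : ℝ} (hσ : Continuous σ)
    (hxc : Continuous x) (hx : ∀ β, x β = α + ∫ η in (0:ℝ)..β, σ (x η)) (β : ℝ) :
    HasDerivAt x (σ (x β)) β := by
  have h : HasDerivAt (fun β => α + ∫ η in (0:ℝ)..β, σ (x η)) (σ (x β)) β :=
    ((hσ.comp hxc).integral_hasStrictDerivAt 0 β).hasDerivAt.const_add α
  rwa [← funext hx] at h

/-- Perturbation estimate for an autonomous scalar ODE, forward in time. -/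
lemma abs_sub_le_of_approx_forward {σ p q v : ℝ → ℝ} {K : NNReal} (hK : 1 ≤ K)
    (hσ : LipschitzWith K σ) (hp : ∀ x, HasDerivAt p (σ (p x)) x) (hq : ∀ x, HasDerivAt q (v x) x)
    (h0 : p 0 = q 0) {δ T : ℝ} (hδ : 0 ≤ δ) (hT : 0 ≤ T)
    (hv : ∀ x ∈ Icc 0 T, |v x - σ (q x)| ≤ δ) : |q T - p T| ≤ δ * Real.exp (K * T) := by
  have h := dist_le_of_approx_trajectories_ODE (v := fun _ => σ) (fun _ => hσ)
    (fun x _ => (hq x).continuousAt.continuousWithinAt) (fun x _ => (hq x).hasDerivWithinAt)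
    (fun x hx => hv x (Ico_subset_Icc_self hx))
    (fun x _ => (hp x).continuousAt.continuousWithinAt) (fun x _ => (hp x).hasDerivWithinAt)
    (fun x _ => (dist_self _).le) (a := 0) (b := T) (δ := 0) (by simp [h0]) T ⟨hT, le_rfl⟩
  have hK' : (1:ℝ) ≤ K := by exact_mod_cast hK
  rw [gronwallBound_of_K_ne_0 (by positivity)] at h
  rw [← Real.dist_eq]
  refine h.trans ?_
  simp only [zero_mul, add_zero, sub_zero, zero_add]
  have h1 : δ / K ≤ δ := div_le_self hδ hK'
  have h2 : 0 ≤ Real.exp (K * T) - 1 := by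
    have := Real.one_le_exp (x := K * T) (by positivity)
    linarith
  calc δ / K * (Real.exp (K * T) - 1) ≤ δ * (Real.exp (K * T) - 1) := by gcongr
    _ ≤ _ := by nlinarith

/-- Perturbation estimate for an autonomous scalar ODE, in both time directions. -/
lemma abs_sub_le_of_approx {σ p q v : ℝ → ℝ} {K : NNReal} (hK : 1 ≤ K)
    (hσ : LipschitzWith K σ) (hp : ∀ x, HasDerivAt p (σ (p x)) x) (hq : ∀ x, HasDerivAt q (v x) x)
    (h0 : p 0 = q 0) {δ T : ℝ} (hδ : 0 ≤ δ)
    (hv : ∀ x ∈ uIcc 0 T, |v x - σ (q x)| ≤ δ) : |q T - p T| ≤ δ * Real.exp (K * |T|) := by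
  rcases le_total 0 T with hT | hT
  · rw [abs_of_nonneg hT]
    rw [uIcc_of_le hT] at hv
    exact abs_sub_le_of_approx_forward hK hσ hp hq h0 hδ hT hv
  · rw [abs_of_nonpos hT]
    rw [uIcc_of_ge hT] at hv
    have h := abs_sub_le_of_approx_forward (σ := fun x => - σ x) (p := fun x => p (-x))
      (q := fun x => q (-x)) (v := fun x => - v (-x)) (δ := δ) (T := -T) hK hσ.neg
      (fun x => ((hp (-x)).comp x (hasDerivAt_neg x)).congr_deriv (by ring))
      (fun x => ((hq (-x)).comp x (hasDerivAt_neg x)).congr_deriv (by ring))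
      (by simpa using h0) hδ (by linarith)
      (fun x hx => by
        have := hv (-x) ⟨by linarith [hx.2], by linarith [hx.1]⟩
        rw [← abs_neg]
        convert this using 2
        ring)
    simpa using h

section Flow

variable {σ : ℝ → ℝ} {φ : ℝ → ℝ → ℝ} {K : NNReal}

lemma flow_add (hK : 1 ≤ K) (hσ : LipschitzWith K σ) (h0 : ∀ α, φ α 0 = α)
    (hφ : ∀ α β, HasDerivAt (φ α) (σ (φ α β)) β) (α β γ : ℝ) : φ (φ α β) γ = φ α (β + γ) := by
  have h := abs_sub_le_of_approx (p := φ (φ α β)) (q := fun x => φ α (β + x))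
    (v := fun x => σ (φ α (β + x))) (δ := 0) (T := γ) hK hσ (hφ _)
    (fun x => by simpa using (hφ α (β + x)).comp_const_add β x) (by simp [h0]) le_rfl (by simp)
  rw [zero_mul, abs_nonpos_iff, sub_eq_zero] at h
  exact h.symm

lemma flow_sub_flow {σ' : ℝ → ℝ} (hσ : ∀ x, HasDerivAt σ (σ' x) x) (hσ' : Continuous σ')
    (h0 : ∀ α, φ α 0 = α)
    (hφ : ∀ α β, HasDerivAt (φ α) (σ (φ α β)) β) (α α' β : ℝ) :
    φ α' β - φ α β =
      (α' - α) * Real.exp (∫ η in (0:ℝ)..β, segMean σ' (φ α η) (φ α' η)) := by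
  have hφc : ∀ α, Continuous (φ α) := fun α =>
    continuous_iff_continuousAt.2 fun β => (hφ α β).continuousAt
  have hSc : Continuous fun p : ℝ × ℝ => segMean σ' p.1 p.2 :=
    (continuous_segMean (F1 := fun x _ => σ' x) (by fun_prop)).comp
      (f := fun p : ℝ × ℝ => (p.1, p.2, (0:ℝ))) (by fun_prop)
  set S : ℝ → ℝ := fun η => segMean σ' (φ α η) (φ α' η) with hS
  have hScont : Continuous S := hSc.comp ((hφc α).prodMk (hφc α'))
  set P : ℝ → ℝ := fun x => ∫ η in (0:ℝ)..x, S η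
  have hP : ∀ x, HasDerivAt P (S x) x := fun x => (hScont.integral_hasStrictDerivAt 0 x).hasDerivAt
  set W : ℝ → ℝ := fun x => (φ α' x - φ α x) * Real.exp (-P x)
  have hW : ∀ x, HasDerivAt W 0 x := by
    intro x
    refine (((hφ α' x).sub (hφ α x)).mul (hP x).neg.exp).congr_deriv ?_
    rw [sub_eq_segMean_mul hσ hσ']
    simp only [Pi.sub_apply, Pi.neg_apply, hS]
    ring
  have hconst : W β = W 0 := is_const_of_deriv_eq_zero (fun x => (hW x).differentiableAt)
    (fun x => (hW x).deriv) β 0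
  simp only [W, P, integral_same, neg_zero, Real.exp_zero, mul_one, h0] at hconst
  rw [← hconst, mul_assoc, ← Real.exp_add]
  simp

lemma abs_flow_sub_flow_le {σ' : ℝ → ℝ} {M : ℝ} (hσ : ∀ x, HasDerivAt σ (σ' x) x)
    (hσ' : Continuous σ') (hM : ∀ x, |σ' x| ≤ M) (h0 : ∀ α, φ α 0 = α)
    (hφ : ∀ α β, HasDerivAt (φ α) (σ (φ α β)) β) (α α' β : ℝ) :
    |φ α' β - φ α β| ≤ Real.exp (M * |β|) * |α' - α| := by
  rw [flow_sub_flow hσ hσ' h0 hφ, abs_mul, mul_comm, abs_of_pos (Real.exp_pos _)]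
  gcongr
  have := norm_integral_le_of_norm_le_const (a := 0) (b := β)
    (f := fun η => segMean σ' (φ α η) (φ α' η)) (C := M) (fun θ _ => abs_segMean_le hM _ _)
  exact (le_abs_self _).trans (by simpa using this)

lemma continuous_flow {σ' : ℝ → ℝ} {M : ℝ} (hσ : ∀ x, HasDerivAt σ (σ' x) x)
    (hσ' : Continuous σ') (hM : ∀ x, |σ' x| ≤ M) (h0 : ∀ α, φ α 0 = α)
    (hφ : ∀ α β, HasDerivAt (φ α) (σ (φ α β)) β) : Continuous fun p : ℝ × ℝ => φ p.1 p.2 := by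
  have hφc : ∀ α, Continuous (φ α) := fun α =>
    continuous_iff_continuousAt.2 fun β => (hφ α β).continuousAt
  rw [continuous_iff_continuousAt]
  rintro ⟨α, β⟩
  have h1 : Tendsto (fun p : ℝ × ℝ => Real.exp (M * |p.2|) * |p.1 - α| + |φ α p.2 - φ α β|)
      (𝓝 (α, β)) (𝓝 0) := by
    have hc : Continuous fun p : ℝ × ℝ =>
        Real.exp (M * |p.2|) * |p.1 - α| + |φ α p.2 - φ α β| := by
      have := hφc α
      fun_prop
    simpa using hc.tendsto (α, β)
  apply tendsto_iff_dist_tendsto_zero.2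
  refine squeeze_zero (fun _ => dist_nonneg) (fun p => ?_) h1
  rw [Real.dist_eq]
  refine (abs_sub_le _ (φ α p.2) _).trans ?_
  gcongr
  exact abs_flow_sub_flow_le hσ hσ' hM h0 hφ _ _ _

/-- The flow is differentiable in its initial value. -/
lemma hasDerivAt_flow_left {σ' : ℝ → ℝ} (hσ : ∀ x, HasDerivAt σ (σ' x) x)
    (hσ' : Continuous σ') (h0 : ∀ α, φ α 0 = α)
    (hφ : ∀ α β, HasDerivAt (φ α) (σ (φ α β)) β) (hc : Continuous fun p : ℝ × ℝ => φ p.1 p.2)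
    (α β : ℝ) :
    HasDerivAt (fun x => φ x β) (Real.exp (∫ η in (0:ℝ)..β, σ' (φ α η))) α := by
  have hSc : Continuous fun p : ℝ × ℝ => segMean σ' p.1 p.2 :=
    (continuous_segMean (F1 := fun x _ => σ' x) (by fun_prop)).comp
      (f := fun p : ℝ × ℝ => (p.1, p.2, (0:ℝ))) (by fun_prop)
  have hI : Continuous fun α' => Real.exp (∫ η in (0:ℝ)..β, segMean σ' (φ α η) (φ α' η)) := by
    apply Real.continuous_exp.comp
    apply continuous_parametric_intervalIntegral_of_continuous'
    exact hSc.comp (f := fun p : ℝ × ℝ => (φ α p.2, φ p.1 p.2))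
      ((hc.comp (f := fun p : ℝ × ℝ => (α, p.2)) (by fun_prop)).prodMk hc)
  rw [hasDerivAt_iff_tendsto_slope]
  have h1 := (hI.tendsto α).mono_left (nhdsWithin_le_nhds (s := {α}ᶜ))
  simp only [segMean_self] at h1
  refine h1.congr' ?_
  filter_upwards [self_mem_nhdsWithin] with α' hα'
  rw [slope_def_field, flow_sub_flow hσ hσ' h0 hφ, mul_div_cancel_left₀]
  exact sub_ne_zero.2 hα'

lemma continuous_flow_deriv {σ' : ℝ → ℝ} (hσ' : Continuous σ')
    (hc : Continuous fun p : ℝ × ℝ => φ p.1 p.2) :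
    Continuous fun p : ℝ × ℝ => Real.exp (∫ η in (0:ℝ)..p.2, σ' (φ p.1 η)) := by
  apply Real.continuous_exp.comp
  apply continuous_parametric_intervalIntegral_of_continuous (μ := volume) (a₀ := 0) _ continuous_snd
  exact hσ'.comp (hc.comp (f := fun p : (ℝ × ℝ) × ℝ => (p.1.1, p.2)) (by fun_prop))

end Flow

/-- The error of the trapezoidal rule is of third order. -/
lemma abs_trapezoid_sub_le {Q Q1 Q2 Q3 : ℝ → ℝ} (h1 : ∀ w, HasDerivAt Q (Q1 w) w)
    (h2 : ∀ w, HasDerivAt Q1 (Q2 w) w) (h3 : ∀ w, HasDerivAt Q2 (Q3 w) w) {B x y : ℝ}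
    (hB : ∀ w ∈ uIcc x y, |Q3 w| ≤ B) :
    |(Q1 x + Q1 y) / 2 * (y - x) - (Q y - Q x)| ≤ B * |y - x| ^ 3 := by
  have mv : ∀ {f f' : ℝ → ℝ} {c : ℝ}, (∀ w, HasDerivAt f (f' w) w) → f x = 0 →
      (∀ w ∈ uIcc x y, |f' w| ≤ c) → ∀ w ∈ uIcc x y, |f w| ≤ c * |y - x| := by
    intro f f' c hf hx hc w hw
    have h := (convex_uIcc x y).norm_image_sub_le_of_norm_hasDerivWithin_le
      (fun z _ => (hf z).hasDerivWithinAt) hc left_mem_uIcc hw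
    rw [hx, sub_zero] at h
    have hc0 : 0 ≤ c := (abs_nonneg _).trans (hc x left_mem_uIcc)
    exact h.trans (mul_le_mul_of_nonneg_left (abs_sub_left_of_mem_uIcc hw) hc0)
  have hB0 : 0 ≤ B := (abs_nonneg _).trans (hB x left_mem_uIcc)
  have e1 : ∀ w ∈ uIcc x y, |Q2 w * (w - x) / 2 - (Q1 w - Q1 x) / 2| ≤ B * |y - x| * |y - x| := by
    refine mv (f := fun w => Q2 w * (w - x) / 2 - (Q1 w - Q1 x) / 2)
      (f' := fun w => Q3 w * (w - x) / 2) (fun w => ?_) (by simp) (fun w hw => ?_)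
    · refine ((((h3 w).mul ((hasDerivAt_id w).sub_const x)).div_const 2).sub
        (((h2 w).sub_const (Q1 x)).div_const 2)).congr_deriv ?_
      simp only [id]; ring
    · rw [abs_div, abs_mul]
      have h4 := hB w hw
      have h5 : |w - x| ≤ |y - x| := abs_sub_left_of_mem_uIcc hw
      have h6 : |Q3 w| * |w - x| ≤ B * |y - x| := by gcongr
      have : 0 ≤ |Q3 w| * |w - x| := by positivity
      rw [abs_of_pos (by norm_num : (0:ℝ) < 2)]
      linarith
  have e2 := mv (f := fun w => (Q1 x + Q1 w) / 2 * (w - x) - (Q w - Q x))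
      (f' := fun w => Q2 w * (w - x) / 2 - (Q1 w - Q1 x) / 2) (fun w => by
        refine (((((h2 w).const_add (Q1 x)).div_const 2).mul
          ((hasDerivAt_id w).sub_const x)).sub ((h1 w).sub_const (Q x))).congr_deriv ?_
        simp only [id]; ring) (by simp) e1 y right_mem_uIcc
  calc _ ≤ _ := e2
    _ = _ := by ring

/-- `F` has continuous first-order partial derivatives `F1` and `p`, where `p` has a continuous
partial derivative `p1` in the first variable and partial derivatives `q` and `r` of first and
second order in the second variable, with `r` continuous. -/
structure HasChainRuleDerivs (F F1 p p1 q r : ℝ → ℝ → ℝ) : Prop where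
  hasDeriv_F1 : ∀ x y, HasDerivAt (fun z => F z y) (F1 x y) x
  hasDeriv_p : ∀ x y, HasDerivAt (F x) (p x y) y
  hasDeriv_p1 : ∀ x y, HasDerivAt (fun z => p z y) (p1 x y) x
  hasDeriv_q : ∀ x y, HasDerivAt (p x) (q x y) y
  hasDeriv_r : ∀ x y, HasDerivAt (q x) (r x y) y
  cont_F : Continuous fun z : ℝ × ℝ => F z.1 z.2
  cont_F1 : Continuous fun z : ℝ × ℝ => F1 z.1 z.2
  cont_p : Continuous fun z : ℝ × ℝ => p z.1 z.2
  cont_p1 : Continuous fun z : ℝ × ℝ => p1 z.1 z.2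
  cont_r : Continuous fun z : ℝ × ℝ => r z.1 z.2

lemma exists_bound_on_square {r : ℝ → ℝ → ℝ} (hr : Continuous fun z : ℝ × ℝ => r z.1 z.2)
    (R : ℝ) : ∃ B, 0 ≤ B ∧ ∀ x ∈ Icc (-R) R, ∀ y ∈ Icc (-R) R, |r x y| ≤ B := by
  obtain ⟨B, hB⟩ := (isCompact_Icc.prod isCompact_Icc :
    IsCompact (Icc (-R) R ×ˢ Icc (-R) R)).exists_bound_of_continuousOn hr.continuousOn
  exact ⟨max B 0, le_max_right _ _, fun x hx y hy => (hB (x, y) ⟨hx, hy⟩).trans (le_max_left _ _)⟩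

lemma exists_common_bound {k g : ℝ → ℝ} (hk : Continuous k) (hg : Continuous g) (T : ℝ) :
    ∃ R, 0 ≤ R ∧ (∀ u ∈ Icc 0 T, k u ∈ Icc (-R) R) ∧ ∀ u ∈ Icc 0 T, g u ∈ Icc (-R) R := by
  obtain ⟨A, hA⟩ := (isCompact_Icc (a := (0:ℝ)) (b := T)).exists_bound_of_continuousOn
    hk.continuousOn
  obtain ⟨B, hB⟩ := (isCompact_Icc (a := (0:ℝ)) (b := T)).exists_bound_of_continuousOn
    hg.continuousOn
  refine ⟨max (max A B) 0, le_max_right _ _, fun u hu => abs_le.1 ?_, fun u hu => abs_le.1 ?_⟩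
  · exact (hA u hu).trans ((le_max_left _ _).trans (le_max_left _ _))
  · exact (hB u hu).trans ((le_max_right _ _).trans (le_max_left _ _))

namespace HasChainRuleDerivs

variable {F F1 p p1 q r : ℝ → ℝ → ℝ} {k g : ℝ → ℝ} {K : NNReal} {C lam : ℝ}

/-- Pointwise remainder estimate for the symmetric difference quotient. -/
lemma exists_remainder_le (h : HasChainRuleDerivs F F1 p p1 q r) (hk : LipschitzWith K k)
    (hgc : Continuous g) (hg : ∀ s t, |g t - g s| ≤ C * |t - s| ^ lam) (t : ℝ) :
    ∃ D, ∀ u ∈ Icc 0 t, ∀ ε ∈ Ioc (0:ℝ) 1,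
      |(p (k (u + ε)) (g (u + ε)) + p (k u) (g u)) / 2 * ((g (u + ε) - g u) / ε)
        - (F (k u) (g (u + ε)) - F (k u) (g u)) / ε| ≤ D * ε ^ (3 * lam - 1) + D * ε ^ lam := by
  obtain ⟨R, hR, hkR, hgR⟩ := exists_common_bound hk.continuous hgc (t + 1)
  obtain ⟨B, hB0, hB⟩ := exists_bound_on_square h.cont_r R
  obtain ⟨B', hB'0, hB'⟩ := exists_bound_on_square h.cont_p1 R
  have hC : 0 ≤ C := by simpa using (abs_nonneg _).trans (hg 0 1)
  refine ⟨max (B * C ^ 3) (B' * K * C), fun u hu ε hε => ?_⟩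
  have hu1 : u ∈ Icc 0 (t + 1) := ⟨hu.1, by linarith [hu.2]⟩
  have hu2 : u + ε ∈ Icc 0 (t + 1) := ⟨by linarith [hu.1, hε.1], by linarith [hu.2, hε.2]⟩
  have hε0 := hε.1
  have hΔ : |g (u + ε) - g u| ≤ C * ε ^ lam := by
    simpa [abs_of_pos hε0] using hg u (u + ε)
  have hkΔ : |k (u + ε) - k u| ≤ K * ε := by
    simpa [Real.dist_eq, abs_of_pos hε0] using hk.dist_le_mul (u + ε) u
  have e1 : |(p (k u) (g u) + p (k u) (g (u + ε))) / 2 * (g (u + ε) - g u)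
      - (F (k u) (g (u + ε)) - F (k u) (g u))| ≤ B * (C * ε ^ lam) ^ 3 := by
    refine (abs_trapezoid_sub_le (h.hasDeriv_p _) (h.hasDeriv_q _) (h.hasDeriv_r _) (B := B)
      fun w hw => hB _ (hkR u hu1) w ?_).trans (by gcongr)
    exact uIcc_subset_Icc (hgR u hu1) (hgR _ hu2) hw
  have e2 : |p (k (u + ε)) (g (u + ε)) - p (k u) (g (u + ε))| ≤ B' * (K * ε) := by
    have := (convex_Icc (-R) R).norm_image_sub_le_of_norm_hasDerivWithin_le
      (fun z _ => (h.hasDeriv_p1 z (g (u + ε))).hasDerivWithinAt)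
      (fun z hz => hB' z hz _ (hgR _ hu2)) (hkR u hu1) (hkR _ hu2)
    exact this.trans (by rw [Real.norm_eq_abs]; gcongr)
  have e3 : |(p (k (u + ε)) (g (u + ε)) - p (k u) (g (u + ε))) / 2 * (g (u + ε) - g u)|
      ≤ B' * (K * ε) * (C * ε ^ lam) := by
    rw [abs_mul, abs_div, abs_of_pos (by norm_num : (0:ℝ) < 2)]
    have : |p (k (u + ε)) (g (u + ε)) - p (k u) (g (u + ε))| / 2 ≤ B' * (K * ε) := by
      linarith [abs_nonneg (p (k (u + ε)) (g (u + ε)) - p (k u) (g (u + ε)))]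
    gcongr
  have hsplit : (p (k (u + ε)) (g (u + ε)) + p (k u) (g u)) / 2 * ((g (u + ε) - g u) / ε)
        - (F (k u) (g (u + ε)) - F (k u) (g u)) / ε =
      (((p (k u) (g u) + p (k u) (g (u + ε))) / 2 * (g (u + ε) - g u)
        - (F (k u) (g (u + ε)) - F (k u) (g u)))
      + (p (k (u + ε)) (g (u + ε)) - p (k u) (g (u + ε))) / 2 * (g (u + ε) - g u)) / ε := by
    ring
  rw [hsplit, abs_div, abs_of_pos hε0, div_le_iff₀ hε0]
  have hpow : ε ^ (3 * lam - 1) * ε = (ε ^ lam) ^ 3 := by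
    rw [← Real.rpow_natCast, ← Real.rpow_mul hε0.le, Real.rpow_sub hε0, Real.rpow_one,
      div_mul_cancel₀ _ hε0.ne']
    congr 1; push_cast; ring
  have hl : 0 ≤ ε ^ lam := Real.rpow_nonneg hε0.le _
  calc _ ≤ B * (C * ε ^ lam) ^ 3 + B' * (K * ε) * (C * ε ^ lam) :=
        (abs_add_le _ _).trans (add_le_add e1 e3)
    _ = (B * C ^ 3) * (ε ^ lam) ^ 3 + (B' * K * C) * (ε ^ lam * ε) := by ring
    _ ≤ max (B * C ^ 3) (B' * K * C) * (ε ^ lam) ^ 3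
        + max (B * C ^ 3) (B' * K * C) * (ε ^ lam * ε) := by
        gcongr
        · exact le_max_left _ _
        · exact le_max_right _ _
    _ = _ := by rw [← hpow]; ring

/-- The change of variables formula for symmetric difference quotients. -/
lemma tendsto_integral (h : HasChainRuleDerivs F F1 p p1 q r) (hk : LipschitzWith K k)
    (hgc : Continuous g) (hg : ∀ s t, |g t - g s| ≤ C * |t - s| ^ lam) (hlam : 1 / 3 < lam)
    {t : ℝ} (ht : 0 ≤ t) :
    Tendsto (fun ε : ℝ => ∫ u in (0:ℝ)..t,
        (p (k (u + ε)) (g (u + ε)) + p (k u) (g u)) / 2 * ((g (u + ε) - g u) / ε))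
      (𝓝[>] 0) (𝓝 (F (k t) (g t) - F (k 0) (g 0) -
        ∫ u in (0:ℝ)..t, F1 (k u) (g u) * deriv k u)) := by
  have hkc := hk.continuous
  have cF : ∀ {v w : ℝ → ℝ}, Continuous v → Continuous w → Continuous fun u => F (v u) (w u) :=
    fun h1 h2 => h.cont_F.comp (h1.prodMk h2)
  have cp : ∀ {v w : ℝ → ℝ}, Continuous v → Continuous w → Continuous fun u => p (v u) (w u) :=
    fun h1 h2 => h.cont_p.comp (h1.prodMk h2)
  set X : ℝ → ℝ := fun u => F (k u) (g u) with hX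
  have hXc : Continuous X := cF hkc hgc
  set A : ℝ → ℝ → ℝ := fun ε u => (F (k (u + ε)) (g (u + ε)) - F (k u) (g (u + ε))) / ε with hA
  set E : ℝ → ℝ → ℝ := fun ε u =>
    (p (k (u + ε)) (g (u + ε)) + p (k u) (g u)) / 2 * ((g (u + ε) - g u) / ε)
        - (F (k u) (g (u + ε)) - F (k u) (g u)) / ε with hE
  have hAc : ∀ ε, Continuous (A ε) := fun ε => by
    have h1 : Continuous fun u => F (k (u + ε)) (g (u + ε)) := cF (by fun_prop) (by fun_prop)
    have h2 : Continuous fun u => F (k u) (g (u + ε)) := cF (by fun_prop) (by fun_prop)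
    exact (h1.sub h2).div_const _
  have hEc : ∀ ε, Continuous (E ε) := fun ε => by
    have h1 : Continuous fun u => p (k (u + ε)) (g (u + ε)) := cp (by fun_prop) (by fun_prop)
    have h2 : Continuous fun u => p (k u) (g u) := cp (by fun_prop) (by fun_prop)
    have h3 : Continuous fun u => F (k u) (g (u + ε)) := cF (by fun_prop) (by fun_prop)
    have h4 : Continuous fun u => F (k u) (g u) := cF (by fun_prop) (by fun_prop)
    have h5 : Continuous fun u => g (u + ε) := by fun_prop
    exact (((h1.add h2).div_const 2).mul ((h5.sub hgc).div_const ε)).sub ((h3.sub h4).div_const ε)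
  -- the telescoping part
  have l1 : Tendsto (fun ε : ℝ => ∫ u in (0:ℝ)..t, (X (u + ε) - X u) / ε) (𝓝[>] 0)
      (𝓝 (X t - X 0)) := by
    have hder : HasDerivAt (fun ε : ℝ => (∫ u in (0:ℝ)..(t + ε), X u) - ∫ u in (0:ℝ)..ε, X u)
        (X t - X 0) 0 := by
      have d1 : HasDerivAt (fun ε : ℝ => ∫ u in (0:ℝ)..(t + ε), X u) (X t) 0 := by
        have := (hXc.integral_hasStrictDerivAt 0 (t + 0)).hasDerivAt.comp_const_add t 0
        simpa using this
      exact d1.sub (hXc.integral_hasStrictDerivAt 0 0).hasDerivAt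
    have := (hasDerivAt_iff_tendsto_slope.1 hder).mono_left
      (nhdsWithin_mono 0 (fun ε (hε : 0 < ε) => hε.ne' : Ioi (0:ℝ) ⊆ {0}ᶜ))
    refine this.congr fun ε => ?_
    have i1 : ∀ c d, IntervalIntegrable X volume c d := fun c d => hXc.intervalIntegrable c d
    have i2 : IntervalIntegrable (fun u => X (u + ε)) volume 0 t :=
      (hXc.comp (by fun_prop : Continuous fun u : ℝ => u + ε)).intervalIntegrable _ _
    rw [slope_def_field, intervalIntegral.integral_div, integral_sub i2 (i1 _ _),
      integral_comp_add_right]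
    simp only [add_zero, integral_same, sub_zero, zero_add]
    congr 1
    have j1 := integral_add_adjacent_intervals (i1 0 ε) (i1 ε (t + ε))
    linarith
  -- the part driven by `k`
  have l2 : Tendsto (fun ε : ℝ => ∫ u in (0:ℝ)..t, A ε u) (𝓝[>] 0)
      (𝓝 (∫ u in (0:ℝ)..t, F1 (k u) (g u) * deriv k u)) := by
    have hS := continuous_segMean h.cont_F1
    have hAS : ∀ ε u, A ε u = segMean (fun x => F1 x (g (u + ε))) (k u) (k (u + ε)) *
        ((k (u + ε) - k u) / ε) := by
      intro ε u
      have hF1c : Continuous fun x => F1 x (g (u + ε)) :=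
        h.cont_F1.comp (f := fun x => (x, g (u + ε))) (by fun_prop)
      simp only [hA]
      rw [sub_eq_segMean_mul (fun x => h.hasDeriv_F1 x (g (u + ε))) hF1c, mul_div_assoc]
    have hSc : Continuous fun z : ℝ × ℝ =>
        segMean (fun x => F1 x (g (z.2 + z.1))) (k z.2) (k (z.2 + z.1)) :=
      hS.comp (f := fun z : ℝ × ℝ => (k z.2, k (z.2 + z.1), g (z.2 + z.1))) (by fun_prop)
    obtain ⟨B, hB⟩ := (isCompact_Icc.prod isCompact_Icc :
      IsCompact (Icc (0:ℝ) 1 ×ˢ Icc (0:ℝ) t)).exists_bound_of_continuousOn hSc.continuousOn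
    apply intervalIntegral.tendsto_integral_filter_of_dominated_convergence (fun _ => B * K)
    · exact Eventually.of_forall fun ε => (hAc ε).aestronglyMeasurable
    · filter_upwards [Ioc_mem_nhdsGT (zero_lt_one (α := ℝ))] with ε hε
      refine ae_of_all _ fun u hu => ?_
      rw [uIoc_of_le ht] at hu
      have b1 := hB (ε, u) ⟨⟨hε.1.le, hε.2⟩, ⟨hu.1.le, hu.2⟩⟩
      have b2 : ‖(k (u + ε) - k u) / ε‖ ≤ K := by
        rw [norm_div, div_le_iff₀ (by simpa using hε.1.ne')]
        simpa [Real.dist_eq] using hk.dist_le_mul (u + ε) u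
      rw [hAS, norm_mul]
      have := (norm_nonneg _).trans b1
      gcongr
    · exact intervalIntegrable_const
    · filter_upwards [hk.ae_differentiableAt_real] with u hu _
      have c1 : Tendsto (fun ε : ℝ => segMean (fun x => F1 x (g (u + ε))) (k u) (k (u + ε)))
          (𝓝[>] 0) (𝓝 (F1 (k u) (g u))) := by
        have hc := hSc.comp (f := fun ε : ℝ => (ε, u)) (by fun_prop)
        have := (hc.tendsto 0).mono_left (nhdsWithin_le_nhds (s := Ioi (0:ℝ)))
        simpa [Function.comp_def, segMean_self] using this
      have c2 : Tendsto (fun ε : ℝ => (k (u + ε) - k u) / ε) (𝓝[>] 0) (𝓝 (deriv k u)) := by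
        have := hu.hasDerivAt.tendsto_slope_zero_right
        simpa [div_eq_inv_mul] using this
      simp only [hAS]
      exact c1.mul c2
  -- the remainder
  have l3 : Tendsto (fun ε : ℝ => ∫ u in (0:ℝ)..t, E ε u) (𝓝[>] 0) (𝓝 0) := by
    obtain ⟨D, hD⟩ := h.exists_remainder_le hk hgc hg t
    have hz : Tendsto (fun ε : ℝ => (D * ε ^ (3 * lam - 1) + D * ε ^ lam) * |t - 0|) (𝓝[>] 0)
        (𝓝 0) := by
      have hp : ∀ {s : ℝ}, 0 < s → Tendsto (fun ε : ℝ => ε ^ s) (𝓝[>] 0) (𝓝 0) := by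
        intro s hs
        have := ((Real.continuousAt_rpow_const 0 s (Or.inr hs.le)).tendsto).mono_left
          (nhdsWithin_le_nhds (s := Ioi (0:ℝ)))
        simpa [Real.zero_rpow hs.ne'] using this
      have := (((hp (by linarith : 0 < 3 * lam - 1)).const_mul D).add
        ((hp (by linarith : 0 < lam)).const_mul D)).mul_const |t - 0|
      simpa using this
    refine squeeze_zero_norm' ?_ hz
    filter_upwards [Ioc_mem_nhdsGT (zero_lt_one (α := ℝ))] with ε hε
    refine intervalIntegral.norm_integral_le_of_norm_le_const fun u hu => ?_
    rw [uIoc_of_le ht] at hu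
    exact hD u ⟨hu.1.le, hu.2⟩ ε hε
  have := (l1.sub l2).add l3
  rw [add_zero] at this
  refine this.congr fun ε => ?_
  have i1 : IntervalIntegrable (fun u => (X (u + ε) - X u) / ε) volume 0 t :=
    Continuous.intervalIntegrable (by fun_prop) _ _
  have i2 := (hAc ε).intervalIntegrable (μ := volume) 0 t
  have i3 := (hEc ε).intervalIntegrable (μ := volume) 0 t
  rw [← integral_sub i1 i2, ← integral_add (i1.sub i2) i3]
  refine integral_congr fun u _ => ?_
  simp only [hX, hA, hE]
  ring

end HasChainRuleDerivs

lemma HasSymmInt.congr {f f' g g' : ℝ → ℝ} {t I : ℝ} (ht : 0 ≤ t) (h : HasSymmInt f g t I)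
    (hf : EqOn f f' (Icc 0 t)) (hg : EqOn g g' (Icc 0 t)) : HasSymmInt f' g' t I := by
  unfold HasSymmInt at h ⊢
  refine h.congr' ?_
  filter_upwards [self_mem_nhdsWithin] with ε (hε : 0 < ε)
  refine integral_congr fun u hu => ?_
  rw [uIcc_of_le ht] at hu
  have hu' : min (u + ε) t ∈ Icc 0 t := ⟨le_min (by linarith [hu.1]) ht, min_le_right _ _⟩
  simp only [hf hu, hf hu', hg hu, hg hu']

/-- The change of variables formula for the symmetric integral. -/
lemma HasChainRuleDerivs.hasSymmInt {F F1 p p1 q r : ℝ → ℝ → ℝ} {k g : ℝ → ℝ} {K : NNReal}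
    {C lam : ℝ} (h : HasChainRuleDerivs F F1 p p1 q r) (hk : LipschitzWith K k)
    (hgc : Continuous g) (hg : ∀ s t, |g t - g s| ≤ C * |t - s| ^ lam) (hlam : 1 / 3 < lam)
    {t : ℝ} (ht : 0 ≤ t) :
    HasSymmInt (fun u => p (k u) (g u)) g t
      (F (k t) (g t) - F (k 0) (g 0) - ∫ u in (0:ℝ)..t, F1 (k u) (g u) * deriv k u) := by
  have hC : 0 ≤ C := by simpa using (abs_nonneg _).trans (hg 0 1)
  have hmin : LipschitzWith 1 fun u : ℝ => min u t := LipschitzWith.id.min_const t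
  have hlim := h.tendsto_integral (k := fun u => k (min u t)) (g := fun u => g (min u t))
    (hk.comp hmin) (by fun_prop) (C := C) (lam := lam) (fun s u => by
      refine (hg _ _).trans ?_
      have : |min u t - min s t| ≤ |u - s| := by
        simpa [Real.dist_eq] using hmin.dist_le_mul u s
      gcongr) hlam ht
  have hintegral : ∫ u in (0:ℝ)..t, F1 (k (min u t)) (g (min u t)) * deriv (fun u => k (min u t)) u
      = ∫ u in (0:ℝ)..t, F1 (k u) (g u) * deriv k u := by
    refine integral_congr_Ioo_of_le ht fun u hu => ?_
    have he : (fun u => k (min u t)) =ᶠ[𝓝 u] k := by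
      filter_upwards [Iio_mem_nhds hu.2] with v hv
      rw [min_eq_left hv.le]
    simp only [he.deriv_eq, min_eq_left hu.2.le]
  simp only [hintegral, min_self, min_eq_left ht] at hlim
  refine hlim.congr fun ε => integral_congr fun u hu => ?_
  rw [uIcc_of_le ht] at hu
  simp only [min_eq_left hu.2]

/-- Differentiation under the integral sign. -/
lemma hasDerivAt_integral_left {ψ ψ1 : ℝ → ℝ → ℝ}
    (hd : ∀ x y, HasDerivAt (fun z => ψ z y) (ψ1 x y) x)
    (hc : Continuous fun z : ℝ × ℝ => ψ z.1 z.2) (hc1 : Continuous fun z : ℝ × ℝ => ψ1 z.1 z.2)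
    (x y : ℝ) :
    HasDerivAt (fun z => ∫ η in (0:ℝ)..y, ψ z η) (∫ η in (0:ℝ)..y, ψ1 x η) x := by
  have hI : Continuous fun x' => ∫ η in (0:ℝ)..y, segMean (fun z => ψ1 z η) x x' := by
    apply continuous_parametric_intervalIntegral_of_continuous'
    exact (continuous_segMean hc1).comp (f := fun z : ℝ × ℝ => (x, z.1, z.2)) (by fun_prop)
  rw [hasDerivAt_iff_tendsto_slope]
  have h1 := (hI.tendsto x).mono_left (nhdsWithin_le_nhds (s := {x}ᶜ))
  simp only [segMean_self] at h1
  refine h1.congr' ?_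
  filter_upwards [self_mem_nhdsWithin] with x' hx'
  have hx : x' - x ≠ 0 := sub_ne_zero.2 hx'
  have hi : ∀ z, IntervalIntegrable (ψ z) volume 0 y := fun z =>
    (hc.comp (f := fun η => (z, η)) (by fun_prop)).intervalIntegrable _ _
  rw [slope_def_field, ← integral_sub (hi _) (hi _), ← intervalIntegral.integral_div]
  refine integral_congr fun η _ => ?_
  have := sub_eq_segMean_mul (fun z => hd z η)
    (hc1.comp (f := fun z => (z, η)) (by fun_prop)) x x'
  rw [this, mul_div_cancel_right₀ _ hx]

section Coefficient

variable {σ σ' σ'' : ℝ → ℝ}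

lemma HasChainRuleDerivs.of_comp {F F1 f f1 f2 f22 : ℝ → ℝ → ℝ}
    (hσ : ∀ x, HasDerivAt σ (σ' x) x) (hσ' : ∀ x, HasDerivAt σ' (σ'' x) x) (hσ'' : Continuous σ'')
    (hF1 : ∀ x y, HasDerivAt (fun z => F z y) (F1 x y) x)
    (hF2 : ∀ x y, HasDerivAt (F x) (σ (f x y)) y)
    (hF : Continuous fun z : ℝ × ℝ => F z.1 z.2) (hF1c : Continuous fun z : ℝ × ℝ => F1 z.1 z.2)
    (hf1 : ∀ x y, HasDerivAt (fun z => f z y) (f1 x y) x)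
    (hf2 : ∀ x y, HasDerivAt (f x) (f2 x y) y) (hf22 : ∀ x y, HasDerivAt (f2 x) (f22 x y) y)
    (hf : Continuous fun z : ℝ × ℝ => f z.1 z.2) (hf1c : Continuous fun z : ℝ × ℝ => f1 z.1 z.2)
    (hf2c : Continuous fun z : ℝ × ℝ => f2 z.1 z.2)
    (hf22c : Continuous fun z : ℝ × ℝ => f22 z.1 z.2) :
    HasChainRuleDerivs F F1 (fun x y => σ (f x y)) (fun x y => σ' (f x y) * f1 x y)
      (fun x y => σ' (f x y) * f2 x y)
      (fun x y => σ'' (f x y) * f2 x y * f2 x y + σ' (f x y) * f22 x y) := by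
  have hσc : Continuous σ := continuous_iff_continuousAt.2 fun x => (hσ x).continuousAt
  have hσ'c : Continuous σ' := continuous_iff_continuousAt.2 fun x => (hσ' x).continuousAt
  exact
    { hasDeriv_F1 := hF1
      hasDeriv_p := hF2
      hasDeriv_p1 := fun x y => (hσ (f x y)).comp x (hf1 x y)
      hasDeriv_q := fun x y => (hσ (f x y)).comp y (hf2 x y)
      hasDeriv_r := fun x y => ((hσ' (f x y)).comp y (hf2 x y)).mul (hf22 x y)
      cont_F := hF
      cont_F1 := hF1c
      cont_p := hσc.comp hf
      cont_p1 := (hσ'c.comp hf).mul hf1c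
      cont_r := (((hσ''.comp hf).mul hf2c).mul hf2c).add ((hσ'c.comp hf).mul hf22c) }

/-- The data of the change of variables formula for a primitive of `σ ∘ f`. -/
lemma IsC13.hasChainRuleDerivs_integral {f : ℝ → ℝ → ℝ} (hf : IsC13 f)
    (hσ : ∀ x, HasDerivAt σ (σ' x) x) (hσ' : ∀ x, HasDerivAt σ' (σ'' x) x)
    (hσ'' : Continuous σ'') :
    ∃ H1 p1 q r, HasChainRuleDerivs (fun x y => ∫ η in (0:ℝ)..y, σ (f x η)) H1
      (fun x y => σ (f x y)) p1 q r := by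
  obtain ⟨hd, hs, hc, hc1, hc2, hc22, -⟩ := hf
  have hσc : Continuous σ := continuous_iff_continuousAt.2 fun x => (hσ x).continuousAt
  have hσ'c : Continuous σ' := continuous_iff_continuousAt.2 fun x => (hσ' x).continuousAt
  have hf1 : ∀ x y, HasDerivAt (fun z => f z y) (deriv (fun z => f z y) x) x :=
    fun x y => (hd y x).hasDerivAt
  have hψder : Continuous fun z : ℝ × ℝ => σ' (f z.1 z.2) * deriv (fun v => f v z.2) z.1 :=
    (hσ'c.comp hc).mul hc1
  have hd2 : ∀ x, Differentiable ℝ (deriv (f x)) := fun x =>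
    (((contDiff_succ_iff_deriv (n := 2)).1 (hs x)).2.2).differentiable (by norm_num)
  refine ⟨fun x y => ∫ η in (0:ℝ)..y, σ' (f x η) * deriv (fun z => f z η) x, _, _, _,
    HasChainRuleDerivs.of_comp hσ hσ' hσ''
      (f1 := fun x y => deriv (fun z => f z y) x) (f2 := fun x y => deriv (f x) y)
      (f22 := fun x y => deriv (deriv (f x)) y) ?_ ?_ ?_ ?_ hf1
      (fun x y => ((hs x).differentiable (by norm_num) y).hasDerivAt)
      (fun x y => (hd2 x y).hasDerivAt) hc hc1 hc2 hc22⟩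
  · exact hasDerivAt_integral_left (fun x y => (hσ (f x y)).comp x (hf1 x y)) (hσc.comp hc) hψder
  · intro x y
    have : Continuous fun η => σ (f x η) :=
      hσc.comp (hc.comp (f := fun η => (x, η)) (by fun_prop))
    exact (this.integral_hasStrictDerivAt 0 y).hasDerivAt
  · apply continuous_parametric_intervalIntegral_of_continuous (μ := volume) (a₀ := 0) _
      continuous_snd
    exact hσc.comp (hc.comp (f := fun p : (ℝ × ℝ) × ℝ => (p.1.1, p.2)) (by fun_prop))
  · apply continuous_parametric_intervalIntegral_of_continuous (μ := volume) (a₀ := 0) _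
      continuous_snd
    exact hψder.comp (f := fun p : (ℝ × ℝ) × ℝ => (p.1.1, p.2)) (by fun_prop)

lemma hasChainRuleDerivs_flow {φ : ℝ → ℝ → ℝ} {M : ℝ} (hσ : ∀ x, HasDerivAt σ (σ' x) x)
    (hσ' : ∀ x, HasDerivAt σ' (σ'' x) x) (hσ'' : Continuous σ'') (hM : ∀ x, |σ' x| ≤ M)
    (h0 : ∀ α, φ α 0 = α) (hφ : ∀ α β, HasDerivAt (φ α) (σ (φ α β)) β) :
    ∃ p1 q r, HasChainRuleDerivs φ (fun x y => Real.exp (∫ η in (0:ℝ)..y, σ' (φ x η)))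
      (fun x y => σ (φ x y)) p1 q r := by
  have hσc : Continuous σ := continuous_iff_continuousAt.2 fun x => (hσ x).continuousAt
  have hσ'c : Continuous σ' := continuous_iff_continuousAt.2 fun x => (hσ' x).continuousAt
  have hc := continuous_flow hσ hσ'c hM h0 hφ
  have h1 := hasDerivAt_flow_left hσ hσ'c h0 hφ hc
  have h1c := continuous_flow_deriv hσ'c hc
  exact ⟨_, _, _, HasChainRuleDerivs.of_comp hσ hσ' hσ'' h1 hφ hc h1c h1 hφ
    (fun x y => (hσ (φ x y)).comp y (hφ x y)) hc h1c (hσc.comp hc)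
    ((hσ'c.comp hc).mul (hσc.comp hc))⟩

lemma isC13_flow {φ : ℝ → ℝ → ℝ} {M : ℝ} (hσ : ∀ x, HasDerivAt σ (σ' x) x)
    (hσ' : ∀ x, HasDerivAt σ' (σ'' x) x) (hσ'' : Continuous σ'') (hM : ∀ x, |σ' x| ≤ M)
    (h0 : ∀ α, φ α 0 = α) (hφ : ∀ α β, HasDerivAt (φ α) (σ (φ α β)) β) : IsC13 φ := by
  have hσc : Continuous σ := continuous_iff_continuousAt.2 fun x => (hσ x).continuousAt
  have hσ'c : Continuous σ' := continuous_iff_continuousAt.2 fun x => (hσ' x).continuousAt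
  obtain ⟨p1, q, r, h⟩ := hasChainRuleDerivs_flow hσ hσ' hσ'' hM h0 hφ
  have e1 : ∀ x, deriv (φ x) = fun y => σ (φ x y) := fun x => funext fun y => (hφ x y).deriv
  have e2 : ∀ x, deriv (fun y => σ (φ x y)) = q x := fun x =>
    funext fun y => (h.hasDeriv_q x y).deriv
  have e3 : ∀ x, deriv (q x) = r x := fun x => funext fun y => (h.hasDeriv_r x y).deriv
  have hrc : ∀ x, Continuous (r x) := fun x =>
    h.cont_r.comp (f := fun y => (x, y)) (by fun_prop)
  have hqc : Continuous fun z : ℝ × ℝ => q z.1 z.2 := by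
    have : (fun z : ℝ × ℝ => q z.1 z.2) = fun z => σ' (φ z.1 z.2) * σ (φ z.1 z.2) := by
      ext z
      exact (h.hasDeriv_q z.1 z.2).unique ((hσ (φ z.1 z.2)).comp z.2 (hφ z.1 z.2))
    rw [this]
    exact (hσ'c.comp h.cont_F).mul (hσc.comp h.cont_F)
  refine ⟨fun y x => (h.hasDeriv_F1 x y).differentiableAt, fun x => ?_, h.cont_F, ?_, ?_, ?_, ?_⟩
  · rw [show (3 : WithTop ℕ∞) = 2 + 1 by norm_num, contDiff_succ_iff_deriv]
    refine ⟨fun y => (hφ x y).differentiableAt, by simp, ?_⟩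
    rw [e1, show (2 : WithTop ℕ∞) = 1 + 1 by norm_num, contDiff_succ_iff_deriv]
    refine ⟨fun y => (h.hasDeriv_q x y).differentiableAt, by simp, ?_⟩
    rw [e2, contDiff_one_iff_deriv, e3]
    exact ⟨fun y => (h.hasDeriv_r x y).differentiableAt, hrc x⟩
  · simpa only [(h.hasDeriv_F1 _ _).deriv] using h.cont_F1
  · simpa only [e1] using h.cont_p
  · simpa only [e1, e2] using hqc
  · simpa only [e1, e2, e3] using h.cont_r

end Coefficient

section Uniqueness

variable {σ σ' σ'' b : ℝ → ℝ} {φ f : ℝ → ℝ → ℝ} {y k g : ℝ → ℝ} {K : NNReal}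

/-- If `f (k s) ·` is, up to an error of order `t - s`, an integral curve of `σ` along the
values of `g`, then pulling `y = f (k, g)` back along the flow of `σ` gives a Lipschitz function. -/
lemma exists_abs_flow_neg_sub_le {M L R : ℝ} (hK : 1 ≤ K) (hσK : LipschitzWith K σ)
    (hσ : ∀ x, HasDerivAt σ (σ' x) x) (hσ' : Continuous σ') (hM : ∀ x, |σ' x| ≤ M)
    (h0 : ∀ α, φ α 0 = α) (hφ : ∀ α β, HasDerivAt (φ α) (σ (φ α β)) β)
    (hf : ∀ x, Continuous (f x)) (hg : Continuous g) (hL : 0 ≤ L)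
    (hgR : ∀ u ∈ Icc (0:ℝ) 1, |g u| ≤ R)
    (hy : ∀ s ∈ Icc (0:ℝ) 1, ∀ t ∈ Icc (0:ℝ) 1, |f (k s) (g t) - y t| ≤ L * |t - s|)
    (hfy : ∀ s ∈ Icc (0:ℝ) 1, ∀ t ∈ Icc (0:ℝ) 1,
      |f (k s) (g t) - (y s + ∫ η in g s..g t, σ (f (k s) η))| ≤ L * |t - s|) :
    ∃ L', 0 ≤ L' ∧ ∀ s ∈ Icc (0:ℝ) 1, ∀ t ∈ Icc (0:ℝ) 1,
      |φ (y t) (-g t) - φ (y s) (-g s)| ≤ L' * |t - s| := by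
  have hσc : Continuous σ := hσK.continuous
  have hM0 : 0 ≤ M := (abs_nonneg _).trans (hM 0)
  refine ⟨Real.exp (M * R) * (L + L + K * L * Real.exp (K * (R + R))), by positivity,
    fun s hs t ht => ?_⟩
  set δ : ℝ := L * |t - s| with hδ
  have hδ0 : 0 ≤ δ := by positivity
  have hc : Continuous fun η => σ (f (k s) η) := hσc.comp (hf _)
  have hsub : ∀ x ∈ uIcc 0 (g t - g s),
      |σ (f (k s) (g s + x)) - σ (y s + ∫ η in g s..g s + x, σ (f (k s) η))| ≤ K * δ := by
    intro x hx
    have hx' : g s + x ∈ uIcc (g s) (g t) := by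
      rw [mem_uIcc] at hx ⊢
      rcases hx with hx | hx
      · exact Or.inl ⟨by linarith, by linarith⟩
      · exact Or.inr ⟨by linarith, by linarith⟩
    obtain ⟨w, hw, hgw⟩ := intermediate_value_uIcc hg.continuousOn hx'
    have hw1 : w ∈ Icc (0:ℝ) 1 := uIcc_subset_Icc hs ht hw
    have h1 := hfy s hs w hw1
    rw [hgw] at h1
    have h2 := hσK.dist_le_mul (f (k s) (g s + x)) (y s + ∫ η in g s..g s + x, σ (f (k s) η))
    rw [Real.dist_eq, Real.dist_eq] at h2
    refine h2.trans (mul_le_mul_of_nonneg_left (h1.trans ?_) K.2)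
    exact mul_le_mul_of_nonneg_left (abs_sub_left_of_mem_uIcc hw) hL
  have hap := abs_sub_le_of_approx hK hσK (hφ (y s))
    (q := fun x => y s + ∫ η in g s..g s + x, σ (f (k s) η))
    (v := fun x => σ (f (k s) (g s + x)))
    (fun x => ((hc.integral_hasStrictDerivAt (g s) (g s + x)).hasDerivAt.comp_const_add
      (g s) x).const_add (y s)) (by simp [h0]) (by positivity) hsub
  simp only [add_sub_cancel] at hap
  have hT : |g t - g s| ≤ R + R := (abs_sub _ _).trans (add_le_add (hgR t ht) (hgR s hs))
  have hexp : Real.exp (K * |g t - g s|) ≤ Real.exp (K * (R + R)) := by gcongr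
  have hap' := hap.trans (mul_le_mul_of_nonneg_left hexp (by positivity : 0 ≤ K * δ))
  have hmain : |y t - φ (y s) (g t - g s)| ≤ δ + δ + K * δ * Real.exp (K * (R + R)) := by
    have e1 := hy s hs t ht
    have e2 := hfy s hs t ht
    rw [abs_sub_comm] at e1
    calc _ = |(y t - f (k s) (g t)) + (f (k s) (g t) - (y s + ∫ η in g s..g t, σ (f (k s) η)))
          + ((y s + ∫ η in g s..g t, σ (f (k s) η)) - φ (y s) (g t - g s))| := by
          congr 1; ring
      _ ≤ _ := (abs_add_three _ _ _).trans (add_le_add (add_le_add e1 e2) hap')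
  have hgroup : φ (y s) (-g s) = φ (φ (y s) (g t - g s)) (-g t) := by
    rw [flow_add hK hσK h0 hφ]; congr 1; ring
  rw [hgroup]
  refine (abs_flow_sub_flow_le hσ hσ' hM h0 hφ _ _ _).trans ?_
  rw [abs_neg]
  calc _ ≤ Real.exp (M * R) * (δ + δ + K * δ * Real.exp (K * (R + R))) := by
        gcongr
        exact hgR t ht
    _ = _ := by rw [hδ]; ring

lemma continuous_exp_neg_integral {ψ : ℝ → ℝ} (hψ : Continuous ψ)
    (hc : Continuous fun p : ℝ × ℝ => φ p.1 p.2) :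
    Continuous fun p : ℝ × ℝ => Real.exp (-∫ η in (0:ℝ)..p.2, ψ (φ p.1 η)) := by
  simp only [Real.exp_neg]
  exact (continuous_flow_deriv hψ hc).inv₀ fun p => (Real.exp_pos _).ne'

lemma continuous_fsb (hσ' : Continuous (deriv σ)) (hb : Continuous b)
    (hc : Continuous fun p : ℝ × ℝ => φ p.1 p.2) :
    Continuous fun p : ℝ × ℝ => fsb b σ φ p.1 p.2 :=
  (continuous_exp_neg_integral hσ' hc).mul (hb.comp hc)

lemma exp_mul_fsb (x y : ℝ) :
    Real.exp (∫ η in (0:ℝ)..y, deriv σ (φ x η)) * fsb b σ φ x y = b (φ x y) := by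
  rw [fsb, ← mul_assoc, ← Real.exp_add, add_neg_cancel, Real.exp_zero, one_mul]

/-- The coefficient `f_{σ,b}` is continuously differentiable in its first variable. -/
lemma exists_hasDerivAt_fsb {F1 : ℝ → ℝ → ℝ} (hσ' : ∀ x, HasDerivAt (deriv σ) (σ'' x) x)
    (hσ'' : Continuous σ'') (hb : ContDiff ℝ 1 b)
    (hc : Continuous fun p : ℝ × ℝ => φ p.1 p.2)
    (hφ1 : ∀ x y, HasDerivAt (fun z => φ z y) (F1 x y) x)
    (hF1 : Continuous fun p : ℝ × ℝ => F1 p.1 p.2) :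
    ∃ G : ℝ → ℝ → ℝ, (∀ x y, HasDerivAt (fun z => fsb b σ φ z y) (G x y) x) ∧
      Continuous fun p : ℝ × ℝ => G p.1 p.2 := by
  have hσ'c : Continuous (deriv σ) := continuous_iff_continuousAt.2 fun x => (hσ' x).continuousAt
  have hec := continuous_exp_neg_integral hσ'c hc
  have hψder : Continuous fun p : ℝ × ℝ => σ'' (φ p.1 p.2) * F1 p.1 p.2 :=
    (hσ''.comp hc).mul hF1
  have hbd := (contDiff_one_iff_deriv.1 hb)
  refine ⟨_, fun x y => (hasDerivAt_integral_left
      (fun x y => (hσ' (φ x y)).comp x (hφ1 x y)) (hσ'c.comp hc) hψder x y).neg.exp.mul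
      (((hbd.1 _).hasDerivAt).comp x (hφ1 x y)), ?_⟩
  have hic : Continuous fun p : ℝ × ℝ => ∫ η in (0:ℝ)..p.2, σ'' (φ p.1 η) * F1 p.1 η := by
    apply continuous_parametric_intervalIntegral_of_continuous (μ := volume) (a₀ := 0) _
      continuous_snd
    exact hψder.comp (f := fun p : (ℝ × ℝ) × ℝ => (p.1.1, p.2)) (by fun_prop)
  exact ((hec.mul hic.neg).mul (hb.continuous.comp hc)).add
    (hec.mul ((hbd.2.comp hc).mul hF1))

/-- Uniqueness for integral equations whose coefficient is continuously differentiable in space. -/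
lemma eqOn_of_integral_eq {V G : ℝ → ℝ → ℝ} {x z : ℝ → ℝ} {ξ : ℝ}
    (hV : Continuous fun p : ℝ × ℝ => V p.1 p.2)
    (hG : ∀ x y, HasDerivAt (fun z => V z y) (G x y) x)
    (hGc : Continuous fun p : ℝ × ℝ => G p.1 p.2)
    (hx : Continuous x) (hz : Continuous z) (hg : Continuous g)
    (hxe : ∀ t ∈ Icc (0:ℝ) 1, x t = ξ + ∫ u in (0:ℝ)..t, V (x u) (g u))
    (hze : ∀ t ∈ Icc (0:ℝ) 1, z t = ξ + ∫ u in (0:ℝ)..t, V (z u) (g u)) :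
    EqOn x z (Icc 0 1) := by
  obtain ⟨R₁, hR₁0, hx₁, hg₁⟩ := exists_common_bound hx hg 1
  obtain ⟨R₂, hR₂0, hz₂, -⟩ := exists_common_bound hz hg 1
  set R := max R₁ R₂
  have s1 : Icc (-R₁) R₁ ⊆ Icc (-R) R :=
    Icc_subset_Icc (neg_le_neg (le_max_left _ _)) (le_max_left _ _)
  have s2 : Icc (-R₂) R₂ ⊆ Icc (-R) R :=
    Icc_subset_Icc (neg_le_neg (le_max_right _ _)) (le_max_right _ _)
  obtain ⟨B, hB0, hB⟩ := exists_bound_on_square hGc R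
  have hder : ∀ {w : ℝ → ℝ}, Continuous w →
      (∀ t ∈ Icc (0:ℝ) 1, w t = ξ + ∫ u in (0:ℝ)..t, V (w u) (g u)) →
      ∀ t ∈ Ico (0:ℝ) 1, HasDerivWithinAt w (V (w t) (g t)) (Ici t) t := by
    intro w hw hwe t ht
    have hc : Continuous fun u => V (w u) (g u) := hV.comp (hw.prodMk hg)
    have hd := ((hc.integral_hasStrictDerivAt 0 t).hasDerivAt.const_add ξ).hasDerivWithinAt
      (s := Ici t)
    refine hd.congr_of_eventuallyEq ?_ (hwe t ⟨ht.1, ht.2.le⟩)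
    filter_upwards [Ico_mem_nhdsGE ht.2] with u hu
    exact hwe u ⟨ht.1.trans hu.1, hu.2.le⟩
  refine ODE_solution_unique_of_mem_Icc_right (v := fun t w => V w (g t))
    (s := fun _ => Icc (-R) R) (K := B.toNNReal) (fun t ht => ?_) hx.continuousOn
    (hder hx hxe) (fun t ht => s1 (hx₁ t ⟨ht.1, ht.2.le⟩)) hz.continuousOn (hder hz hze)
    (fun t ht => s2 (hz₂ t ⟨ht.1, ht.2.le⟩)) ?_
  · refine (convex_Icc (-R) R).lipschitzOnWith_of_nnnorm_hasDerivWithin_le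
      (fun w _ => (hG w (g t)).hasDerivWithinAt) fun w hw => ?_
    rw [← NNReal.coe_le_coe, coe_nnnorm, Real.coe_toNNReal _ hB0]
    exact hB w hw _ (s1 (hg₁ t ⟨ht.1, ht.2.le⟩))
  · rw [hxe 0 (by simp), hze 0 (by simp)]
    simp

end Uniqueness

lemma exists_holder_extension {g : ℝ → ℝ} {C lam : ℝ} (hlam : 0 < lam)
    (hg : ∀ s ∈ Icc (0:ℝ) 1, ∀ t ∈ Icc (0:ℝ) 1, |g t - g s| ≤ C * |t - s| ^ lam) :
    ∃ G : ℝ → ℝ, Continuous G ∧ (∀ s t, |G t - G s| ≤ C * |t - s| ^ lam) ∧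
      EqOn g G (Icc 0 1) := by
  have hC : 0 ≤ C := by simpa using (abs_nonneg _).trans (hg 0 (by simp) 1 (by simp))
  have hH : ∀ s t : ℝ, |g (projIcc 0 1 zero_le_one t) - g (projIcc 0 1 zero_le_one s)|
      ≤ C * |t - s| ^ lam := by
    intro s t
    refine (hg _ (projIcc 0 1 zero_le_one s).2 _ (projIcc 0 1 zero_le_one t).2).trans ?_
    have : |(projIcc (0:ℝ) 1 zero_le_one t : ℝ) - projIcc (0:ℝ) 1 zero_le_one s| ≤ |t - s| :=
      abs_projIcc_sub_projIcc _
    gcongr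
  refine ⟨fun u => g (projIcc 0 1 zero_le_one u), ?_, hH, fun u hu => ?_⟩
  · rw [continuous_iff_continuousAt]
    intro s
    refine tendsto_iff_dist_tendsto_zero.2 (squeeze_zero (fun _ => dist_nonneg)
      (fun t => hH s t) ?_)
    have hc : Continuous fun t : ℝ => C * |t - s| ^ lam := by
      have : Continuous fun v : ℝ => v ^ lam := Real.continuous_rpow_const hlam.le
      fun_prop
    simpa [Real.zero_rpow hlam.ne'] using hc.tendsto s
  · simp [projIcc_of_mem zero_le_one hu]

lemma LipschitzWith.abs_deriv_le {k : ℝ → ℝ} {K : NNReal} (hk : LipschitzWith K k) (u : ℝ) :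
    |deriv k u| ≤ K := by
  simpa using norm_deriv_le_of_lipschitz (x₀ := u) hk

lemma LipschitzWith.intervalIntegrable_mul_deriv {w k : ℝ → ℝ} {K : NNReal}
    (hk : LipschitzWith K k) (hw : Continuous w) (c d : ℝ) :
    IntervalIntegrable (fun u => w u * deriv k u) volume c d := by
  refine (IntervalIntegrable.continuousOn_mul ?_ hw.continuousOn)
  rw [intervalIntegrable_iff]
  exact Measure.integrableOn_of_bounded (M := K) (by simp)
    (measurable_deriv k).aestronglyMeasurable (ae_of_all _ fun u => hk.abs_deriv_le u)

/-- A bounded-coefficient flow of class `C²` together with the drift coefficient `b`. -/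
structure FlowSetting (b σ : ℝ → ℝ) (φ : ℝ → ℝ → ℝ) (M : ℝ) (K : NNReal) : Prop where
  one_le_K : 1 ≤ K
  lipschitz : LipschitzWith K σ
  abs_sigma_le : ∀ x, |σ x| ≤ M
  hasDerivAt_sigma : ∀ x, HasDerivAt σ (deriv σ x) x
  hasDerivAt_deriv : ∀ x, HasDerivAt (deriv σ) (deriv (deriv σ) x) x
  continuous_deriv_deriv : Continuous (deriv (deriv σ))
  abs_deriv_le : ∀ x, |deriv σ x| ≤ M
  flow_zero : ∀ α, φ α 0 = α
  hasDerivAt_flow : ∀ α β, HasDerivAt (φ α) (σ (φ α β)) β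
  contDiff_drift : ContDiff ℝ 1 b
  abs_drift_le : ∀ x, |b x| ≤ M

lemma exists_flowSetting {b σ : ℝ → ℝ} {φ : ℝ → ℝ → ℝ} (hb : CbN 1 b) (hσ : CbN 2 σ)
    (hφ : ∀ α β : ℝ, φ α β = α + ∫ η in (0:ℝ)..β, σ (φ α η)) :
    ∃ M K, FlowSetting b σ φ M K := by
  obtain ⟨hσ1, hσ2⟩ := hσ
  obtain ⟨M₀, hM₀⟩ := hσ2 0 (by norm_num)
  obtain ⟨M₁, hM₁⟩ := hσ2 1 (by norm_num)
  obtain ⟨M₂, hM₂⟩ := hb.2 0 (by norm_num)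
  simp only [iteratedDeriv_zero, iteratedDeriv_one] at hM₀ hM₁ hM₂
  have hs := (contDiff_succ_iff_deriv (n := 1)).1 hσ1
  have hs' := contDiff_one_iff_deriv.1 hs.2.2
  have hc : ∀ α, Continuous (φ α) := fun α =>
    continuous_of_integral_eq hσ1.continuous hM₀ (hφ α)
  have hK : (0:ℝ) ≤ max M₁ 1 := le_max_of_le_right zero_le_one
  refine ⟨max (max M₀ M₁) M₂, (max M₁ 1).toNNReal, ?_, ?_, ?_, fun x => (hs.1 x).hasDerivAt,
    fun x => (hs'.1 x).hasDerivAt, hs'.2, ?_, fun α => by simp [hφ α 0],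
    fun α => hasDerivAt_of_integral_eq hσ1.continuous (hc α) (hφ α), hb.1, ?_⟩
  · rw [← NNReal.coe_le_coe, Real.coe_toNNReal _ hK]
    exact le_max_right _ _
  · refine lipschitzWith_of_nnnorm_deriv_le hs.1 fun x => ?_
    rw [← NNReal.coe_le_coe, coe_nnnorm, Real.coe_toNNReal _ hK]
    exact (hM₁ x).trans (le_max_left _ _)
  · exact fun x => (hM₀ x).trans ((le_max_left _ _).trans (le_max_left _ _))
  · exact fun x => (hM₁ x).trans ((le_max_right _ _).trans (le_max_left _ _))
  · exact fun x => (hM₂ x).trans (le_max_right _ _)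

namespace FlowSetting

variable {b σ : ℝ → ℝ} {φ : ℝ → ℝ → ℝ} {M : ℝ} {K : NNReal}

lemma continuous_deriv (S : FlowSetting b σ φ M K) : Continuous (deriv σ) :=
  continuous_iff_continuousAt.2 fun x => (S.hasDerivAt_deriv x).continuousAt

lemma continuous_flow (S : FlowSetting b σ φ M K) : Continuous fun p : ℝ × ℝ => φ p.1 p.2 :=
  _root_.continuous_flow S.hasDerivAt_sigma S.continuous_deriv S.abs_deriv_le S.flow_zero
    S.hasDerivAt_flow

lemma continuous_fsb (S : FlowSetting b σ φ M K) :
    Continuous fun p : ℝ × ℝ => fsb b σ φ p.1 p.2 :=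
  _root_.continuous_fsb S.continuous_deriv S.contDiff_drift.continuous S.continuous_flow

lemma isC13 (S : FlowSetting b σ φ M K) : IsC13 φ :=
  isC13_flow S.hasDerivAt_sigma S.hasDerivAt_deriv S.continuous_deriv_deriv S.abs_deriv_le
    S.flow_zero S.hasDerivAt_flow

lemma abs_flow_sub_le_right (S : FlowSetting b σ φ M K) (α β β' : ℝ) :
    |φ α β' - φ α β| ≤ M * |β' - β| :=
  convex_univ.norm_image_sub_le_of_norm_hasDerivWithin_le
    (fun x _ => (S.hasDerivAt_flow α x).hasDerivWithinAt) (fun _ _ => S.abs_sigma_le _)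
    (mem_univ β) (mem_univ β')

/-- The change of variables formula along the flow. -/
lemma hasSymmInt (S : FlowSetting b σ φ M K) {k g : ℝ → ℝ} {L : NNReal} {C lam : ℝ}
    (hk : LipschitzWith L k) (hgc : Continuous g)
    (hg : ∀ s t, |g t - g s| ≤ C * |t - s| ^ lam) (hlam : 1 / 3 < lam) {t : ℝ} (ht : 0 ≤ t) :
    HasSymmInt (fun u => σ (φ (k u) (g u))) g t
      (φ (k t) (g t) - φ (k 0) (g 0) -
        ∫ u in (0:ℝ)..t, Real.exp (∫ η in (0:ℝ)..g u, deriv σ (φ (k u) η)) * deriv k u) := by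
  obtain ⟨p1, q, r, h⟩ := hasChainRuleDerivs_flow S.hasDerivAt_sigma S.hasDerivAt_deriv
    S.continuous_deriv_deriv S.abs_deriv_le S.flow_zero S.hasDerivAt_flow
  exact h.hasSymmInt hk hgc hg hlam ht

lemma eqOn_of_integral_eq (S : FlowSetting b σ φ M K) {x z g : ℝ → ℝ} {ξ : ℝ}
    (hx : Continuous x) (hz : Continuous z) (hg : Continuous g)
    (hxe : ∀ t ∈ Icc (0:ℝ) 1, x t = ξ + ∫ u in (0:ℝ)..t, fsb b σ φ (x u) (g u))
    (hze : ∀ t ∈ Icc (0:ℝ) 1, z t = ξ + ∫ u in (0:ℝ)..t, fsb b σ φ (z u) (g u)) :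
    EqOn x z (Icc 0 1) := by
  obtain ⟨G, hG, hGc⟩ := exists_hasDerivAt_fsb S.hasDerivAt_deriv S.continuous_deriv_deriv
    S.contDiff_drift S.continuous_flow
    (hasDerivAt_flow_left S.hasDerivAt_sigma S.continuous_deriv S.flow_zero S.hasDerivAt_flow
      S.continuous_flow) (continuous_flow_deriv S.continuous_deriv S.continuous_flow)
  exact _root_.eqOn_of_integral_eq S.continuous_fsb hG hGc hx hz hg hxe hze

/-- The Doss–Sussmann function solves the equation. -/
lemma hasSymmInt_of_integral_eq (S : FlowSetting b σ φ M K) {k g : ℝ → ℝ} {L : NNReal}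
    {C lam ξ : ℝ} (hk : LipschitzWith L k) (hgc : Continuous g)
    (hg : ∀ s t, |g t - g s| ≤ C * |t - s| ^ lam) (hg0 : g 0 = 0) (hlam : 1 / 3 < lam)
    (hke : ∀ t ∈ Icc (0:ℝ) 1, k t = ξ + ∫ u in (0:ℝ)..t, fsb b σ φ (k u) (g u))
    {t : ℝ} (ht : t ∈ Icc (0:ℝ) 1) :
    HasSymmInt (fun u => σ (φ (k u) (g u))) g t
      (φ (k t) (g t) - ξ - ∫ u in (0:ℝ)..t, b (φ (k u) (g u))) := by
  have h := S.hasSymmInt hk hgc hg hlam ht.1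
  have hk0 : k 0 = ξ := by simpa using hke 0 (by simp)
  have hw : Continuous fun u => fsb b σ φ (k u) (g u) :=
    S.continuous_fsb.comp (hk.continuous.prodMk hgc)
  have hintegral : ∫ u in (0:ℝ)..t, Real.exp (∫ η in (0:ℝ)..g u, deriv σ (φ (k u) η)) * deriv k u
      = ∫ u in (0:ℝ)..t, b (φ (k u) (g u)) := by
    refine integral_congr_Ioo_of_le ht.1 fun u hu => ?_
    have hd : HasDerivAt k (fsb b σ φ (k u) (g u)) u := by
      refine ((hw.integral_hasStrictDerivAt 0 u).hasDerivAt.const_add ξ).congr_of_eventuallyEq ?_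
      filter_upwards [Icc_mem_nhds hu.1 (hu.2.trans_le ht.2)] with v hv
      exact hke v hv
    simp only [hd.deriv, exp_mul_fsb]
  rwa [hintegral, hk0, hg0, S.flow_zero] at h

/-- Pulling back a solution of class `𝔠` along the flow gives a Lipschitz function. -/
lemma exists_abs_flow_neg_sub_le (S : FlowSetting b σ φ M K) {f : ℝ → ℝ → ℝ} {k g : ℝ → ℝ}
    {L : NNReal} {C lam ξ : ℝ} (hf : IsC13 f) (hk : LipschitzWith L k) (hgc : Continuous g)
    (hg : ∀ s t, |g t - g s| ≤ C * |t - s| ^ lam) (hlam : 1 / 3 < lam)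
    (hy : ∀ t ∈ Icc (0:ℝ) 1, ∃ I, HasSymmInt (fun u => σ (f (k u) (g u))) g t I ∧
      f (k t) (g t) = ξ + (∫ u in (0:ℝ)..t, b (f (k u) (g u))) + I) :
    ∃ L', 0 ≤ L' ∧ ∀ s ∈ Icc (0:ℝ) 1, ∀ t ∈ Icc (0:ℝ) 1,
      |φ (f (k t) (g t)) (-g t) - φ (f (k s) (g s)) (-g s)| ≤ L' * |t - s| := by
  obtain ⟨H1, p1, q, r, h⟩ := hf.hasChainRuleDerivs_integral S.hasDerivAt_sigma
    S.hasDerivAt_deriv S.continuous_deriv_deriv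
  obtain ⟨hf1, -, hfc, hf1c, -⟩ := hf
  set H : ℝ → ℝ → ℝ := fun x y => ∫ η in (0:ℝ)..y, σ (f x η) with hH
  set Y : ℝ → ℝ := fun t => f (k t) (g t) with hYdef
  have hkc := hk.continuous
  have hYc : Continuous fun u => b (Y u) :=
    S.contDiff_drift.continuous.comp (hfc.comp (hkc.prodMk hgc))
  have hH1c : Continuous fun u => H1 (k u) (g u) := h.cont_F1.comp (hkc.prodMk hgc)
  have hY : ∀ t ∈ Icc (0:ℝ) 1, Y t = ξ + (∫ u in (0:ℝ)..t, b (Y u)) +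
      (H (k t) (g t) - H (k 0) (g 0) - ∫ u in (0:ℝ)..t, H1 (k u) (g u) * deriv k u) := by
    intro t ht
    obtain ⟨I, hI, hYI⟩ := hy t ht
    rw [← tendsto_nhds_unique hI (h.hasSymmInt hk hgc hg hlam ht.1)]
    exact hYI
  obtain ⟨R, hR0, hkR, hgR⟩ := exists_common_bound hkc hgc 1
  obtain ⟨B, hB0, hB⟩ :=
    exists_bound_on_square (r := fun x y => deriv (fun v => f v y) x) hf1c R
  obtain ⟨B₁, hB₁0, hB₁⟩ := exists_bound_on_square h.cont_F1 R
  have hM0 : 0 ≤ M := (abs_nonneg _).trans (S.abs_sigma_le 0)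
  have hkΔ : ∀ s t, |k t - k s| ≤ L * |t - s| := fun s t => by
    simpa [Real.dist_eq] using hk.dist_le_mul t s
  have e1 : ∀ s ∈ Icc (0:ℝ) 1, ∀ t ∈ Icc (0:ℝ) 1,
      |f (k s) (g t) - Y t| ≤ B * L * |t - s| := by
    intro s hs t ht
    have := (convex_Icc (-R) R).norm_image_sub_le_of_norm_hasDerivWithin_le
      (fun z _ => (hf1 (g t) z).hasDerivAt.hasDerivWithinAt)
      (fun z hz => hB z hz _ (hgR t ht)) (hkR s hs) (hkR t ht)
    rw [abs_sub_comm, mul_assoc]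
    exact this.trans (mul_le_mul_of_nonneg_left (hkΔ s t) hB0)
  have e2 : ∀ s ∈ Icc (0:ℝ) 1, ∀ t ∈ Icc (0:ℝ) 1,
      |H (k t) (g t) - H (k s) (g t)| ≤ B₁ * L * |t - s| := by
    intro s hs t ht
    have := (convex_Icc (-R) R).norm_image_sub_le_of_norm_hasDerivWithin_le
      (fun z _ => (h.hasDeriv_F1 z (g t)).hasDerivWithinAt)
      (fun z hz => hB₁ z hz _ (hgR t ht)) (hkR s hs) (hkR t ht)
    rw [mul_assoc]
    exact this.trans (mul_le_mul_of_nonneg_left (hkΔ s t) hB₁0)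
  have e3 : ∀ s t, |∫ u in s..t, b (Y u)| ≤ M * |t - s| := fun s t =>
    norm_integral_le_of_norm_le_const (f := fun u => b (Y u)) fun u _ => S.abs_drift_le _
  have e4 : ∀ s ∈ Icc (0:ℝ) 1, ∀ t ∈ Icc (0:ℝ) 1,
      |∫ u in s..t, H1 (k u) (g u) * deriv k u| ≤ B₁ * L * |t - s| := by
    intro s hs t ht
    refine intervalIntegral.norm_integral_le_of_norm_le_const
      (f := fun u => H1 (k u) (g u) * deriv k u) fun u hu => ?_
    have hu' : u ∈ Icc (0:ℝ) 1 := uIcc_subset_Icc hs ht (uIoc_subset_uIcc hu)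
    rw [norm_mul]
    exact mul_le_mul (hB₁ _ (hkR u hu') _ (hgR u hu')) (hk.abs_deriv_le u) (norm_nonneg _) hB₁0
  refine _root_.exists_abs_flow_neg_sub_le (f := f) (y := Y) (k := k)
    (L := B * L + M + B₁ * L + B₁ * L) (R := R) S.one_le_K
    S.lipschitz S.hasDerivAt_sigma S.continuous_deriv S.abs_deriv_le S.flow_zero S.hasDerivAt_flow
    (fun x => hfc.comp (f := fun y => (x, y)) (by fun_prop)) hgc (by positivity)
    (fun u hu => abs_le.2 (hgR u hu)) (fun s hs t ht => ?_) (fun s hs t ht => ?_)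
  · refine (e1 s hs t ht).trans ?_
    gcongr
    have : 0 ≤ B₁ * L := by positivity
    linarith
  · have hcσ : Continuous fun η => σ (f (k s) η) :=
      S.lipschitz.continuous.comp (hfc.comp (f := fun η => (k s, η)) (by fun_prop))
    have i1 : ∫ η in g s..g t, σ (f (k s) η) = H (k s) (g t) - H (k s) (g s) :=
      (integral_interval_sub_left (hcσ.intervalIntegrable _ _) (hcσ.intervalIntegrable _ _)).symm
    have i2 : ∫ u in s..t, b (Y u) = (∫ u in (0:ℝ)..t, b (Y u)) - ∫ u in (0:ℝ)..s, b (Y u) :=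
      (integral_interval_sub_left (hYc.intervalIntegrable _ _) (hYc.intervalIntegrable _ _)).symm
    have i3 : ∫ u in s..t, H1 (k u) (g u) * deriv k u =
        (∫ u in (0:ℝ)..t, H1 (k u) (g u) * deriv k u) -
          ∫ u in (0:ℝ)..s, H1 (k u) (g u) * deriv k u :=
      (integral_interval_sub_left (hk.intervalIntegrable_mul_deriv hH1c _ _)
        (hk.intervalIntegrable_mul_deriv hH1c _ _)).symm
    have hsplit : f (k s) (g t) - (Y s + ∫ η in g s..g t, σ (f (k s) η)) =
        (f (k s) (g t) - Y t) + (∫ u in s..t, b (Y u)) +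
        (H (k t) (g t) - H (k s) (g t)) + -∫ u in s..t, H1 (k u) (g u) * deriv k u := by
      rw [i1, i2, i3]
      linear_combination hY t ht - hY s hs
    rw [hsplit]
    have e4' := e4 s hs t ht
    rw [← abs_neg] at e4'
    refine (abs_add_le _ _).trans ((add_le_add ((abs_add_three _ _ _).trans
      (add_le_add (add_le_add (e1 s hs t ht) (e3 s t)) (e2 s hs t ht))) e4').trans (le_of_eq ?_))
    ring

/-- A function `φ (z, g)` with `z` Lipschitz which solves the equation is the Doss–Sussmann
function. -/
lemma integral_eq_of_hasSymmInt (S : FlowSetting b σ φ M K) {z g : ℝ → ℝ} {L : NNReal}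
    {C lam ξ : ℝ} (hz : LipschitzWith L z) (hgc : Continuous g)
    (hg : ∀ s t, |g t - g s| ≤ C * |t - s| ^ lam) (hg0 : g 0 = 0) (hlam : 1 / 3 < lam)
    (hy : ∀ t ∈ Icc (0:ℝ) 1, ∃ I, HasSymmInt (fun u => σ (φ (z u) (g u))) g t I ∧
      φ (z t) (g t) = ξ + (∫ u in (0:ℝ)..t, b (φ (z u) (g u))) + I) :
    ∀ t ∈ Icc (0:ℝ) 1, z t = ξ + ∫ u in (0:ℝ)..t, fsb b σ φ (z u) (g u) := by
  set e : ℝ → ℝ := fun u => Real.exp (∫ η in (0:ℝ)..g u, deriv σ (φ (z u) η)) with he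
  have hzc := hz.continuous
  have hec : Continuous e :=
    (continuous_flow_deriv S.continuous_deriv S.continuous_flow).comp (hzc.prodMk hgc)
  have hbc : Continuous fun u => b (φ (z u) (g u)) :=
    S.contDiff_drift.continuous.comp (S.continuous_flow.comp (hzc.prodMk hgc))
  have hei : ∀ c d, IntervalIntegrable (fun u => e u * deriv z u) volume c d :=
    hz.intervalIntegrable_mul_deriv hec
  have hbi : ∀ c d, IntervalIntegrable (fun u => b (φ (z u) (g u))) volume c d :=
    fun c d => hbc.intervalIntegrable c d
  have hY : ∀ t ∈ Icc (0:ℝ) 1, φ (z t) (g t) = ξ + (∫ u in (0:ℝ)..t, b (φ (z u) (g u))) +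
      (φ (z t) (g t) - φ (z 0) (g 0) - ∫ u in (0:ℝ)..t, e u * deriv z u) := by
    intro t ht
    obtain ⟨I, hI, hYI⟩ := hy t ht
    rw [← tendsto_nhds_unique hI (S.hasSymmInt hz hgc hg hlam ht.1)]
    exact hYI
  have hz0 : z 0 = ξ := by
    have := hY 0 (by simp)
    simpa [hg0, S.flow_zero] using this
  have hzero : ∀ t ∈ Icc (0:ℝ) 1,
      ∫ u in (0:ℝ)..t, (e u * deriv z u - b (φ (z u) (g u))) = 0 := by
    intro t ht
    rw [integral_sub (hei _ _) (hbi _ _)]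
    have := hY t ht
    rw [hg0, S.flow_zero, hz0] at this
    linarith
  have hae : ∀ᵐ u, u ∈ Ioc (0:ℝ) 1 → deriv z u = fsb b σ φ (z u) (g u) := by
    have hne : ∀ᵐ u : ℝ, u ≠ 1 := by simp [ae_iff, measure_singleton]
    filter_upwards [((hei 0 1).sub (hbi 0 1)).ae_hasDerivAt_integral, hne] with u hu hu1 hmem
    rw [uIcc_of_le zero_le_one] at hu
    have hd := hu ⟨hmem.1.le, hmem.2⟩ 0 (by simp)
    have hd0 : HasDerivAt (fun x => ∫ u in (0:ℝ)..x, (e u * deriv z u - b (φ (z u) (g u)))) 0 u := by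
      refine (hasDerivAt_const u (0:ℝ)).congr_of_eventuallyEq ?_
      filter_upwards [Icc_mem_nhds hmem.1 (lt_of_le_of_ne hmem.2 hu1)] with v hv
      exact hzero v hv
    have heq : e u * deriv z u - b (φ (z u) (g u)) = 0 := hd.unique hd0
    rw [← exp_mul_fsb (σ := σ) (b := b), ← mul_sub] at heq
    have := (mul_eq_zero.1 heq).resolve_left (Real.exp_pos _).ne'
    linarith
  intro t ht
  have hac := (hz.lipschitzOnWith (s := uIcc 0 t)).absolutelyContinuousOnInterval
  have hft := hac.integral_deriv_eq_sub
  have hcongr : ∫ u in (0:ℝ)..t, deriv z u = ∫ u in (0:ℝ)..t, fsb b σ φ (z u) (g u) := by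
    refine intervalIntegral.integral_congr_ae ?_
    filter_upwards [hae] with u hu hmem
    rw [uIoc_of_le ht.1] at hmem
    exact hu ⟨hmem.1, hmem.2.trans ht.2⟩
  rw [← hcongr, hft, hz0]
  ring

end FlowSetting

/-- `y` solves `y_t = ξ + ∫₀ᵗ b(y_u) du + ∫₀ᵗ σ(y_u) dᵒg_u` on `[0,1]`. -/
def SolvesSymmEq (b σ : ℝ → ℝ) (ξ : ℝ) (g y : ℝ → ℝ) : Prop :=
  ∀ t ∈ Icc (0:ℝ) 1, ∃ I : ℝ, HasSymmInt (fun u => σ (y u)) g t I ∧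
    y t = ξ + (∫ u in (0:ℝ)..t, b (y u)) + I

lemma SolvesSymmEq.congr {b σ g g' y y' : ℝ → ℝ} {ξ : ℝ} (h : SolvesSymmEq b σ ξ g y)
    (hy : EqOn y y' (Icc 0 1)) (hg : EqOn g g' (Icc 0 1)) : SolvesSymmEq b σ ξ g' y' := by
  intro t ht
  obtain ⟨I, hI, hyI⟩ := h t ht
  have hsub : Icc 0 t ⊆ Icc (0:ℝ) 1 := Icc_subset_Icc_right ht.2
  refine ⟨I, hI.congr ht.1 (fun u hu => congrArg σ (hy (hsub hu))) (hg.mono hsub), ?_⟩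
  have hintegral : ∫ u in (0:ℝ)..t, b (y u) = ∫ u in (0:ℝ)..t, b (y' u) := by
    refine integral_congr fun u hu => ?_
    rw [uIcc_of_le ht.1] at hu
    exact congrArg b (hy (hsub hu))
  rw [← hy ht, ← hintegral]
  exact hyI

lemma lipschitzOnWith_of_integral_eq {a w : ℝ → ℝ} {ξ : ℝ} (hw : Continuous w)
    (ha : ∀ t ∈ Icc (0:ℝ) 1, a t = ξ + ∫ u in (0:ℝ)..t, w u) :
    ∃ L : NNReal, LipschitzOnWith L a (Icc 0 1) := by
  obtain ⟨B, hB⟩ := (isCompact_Icc (a := (0:ℝ)) (b := 1)).exists_bound_of_continuousOn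
    hw.continuousOn
  refine ⟨B.toNNReal, LipschitzOnWith.of_dist_le_mul fun t ht s hs => ?_⟩
  have hts : a t - a s = ∫ u in s..t, w u := by
    rw [ha t ht, ha s hs, ← integral_interval_sub_left (hw.intervalIntegrable 0 t)
      (hw.intervalIntegrable 0 s)]
    ring
  rw [Real.dist_eq, Real.dist_eq, hts]
  refine norm_integral_le_of_norm_le_const (f := w) fun u hu => ?_
  exact (hB u (uIcc_subset_Icc hs ht (uIoc_subset_uIcc hu))).trans (Real.le_coe_toNNReal B)

namespace FlowSetting

variable {b σ : ℝ → ℝ} {φ : ℝ → ℝ → ℝ} {M : ℝ} {K : NNReal}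

lemma solvesSymmEq_flow (S : FlowSetting b σ φ M K) {k g : ℝ → ℝ} {L : NNReal}
    {C lam ξ : ℝ} (hk : LipschitzWith L k) (hgc : Continuous g)
    (hg : ∀ s t, |g t - g s| ≤ C * |t - s| ^ lam) (hg0 : g 0 = 0) (hlam : 1 / 3 < lam)
    (hke : ∀ t ∈ Icc (0:ℝ) 1, k t = ξ + ∫ u in (0:ℝ)..t, fsb b σ φ (k u) (g u)) :
    SolvesSymmEq b σ ξ g fun t => φ (k t) (g t) :=
  fun _ ht => ⟨_, S.hasSymmInt_of_integral_eq hk hgc hg hg0 hlam hke ht, by ring⟩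

lemma inClassC_flow (S : FlowSetting b σ φ M K) {a g : ℝ → ℝ} {L : NNReal} {C lam : ℝ}
    (ha : LipschitzOnWith L a (Icc 0 1)) (hlam : 0 < lam) (hlam1 : lam < 1)
    (hg : ∀ s ∈ Icc (0:ℝ) 1, ∀ t ∈ Icc (0:ℝ) 1, |g t - g s| ≤ C * |t - s| ^ lam) :
    InClassC lam g fun t => φ (a t) (g t) := by
  refine ⟨?_, φ, a, L, S.isC13, ha, fun _ _ => rfl⟩
  obtain ⟨G, hGc, -, hgG⟩ := exists_holder_extension hlam hg
  obtain ⟨R, hR0, hR, -⟩ := exists_common_bound hGc hGc 1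
  have hM0 : 0 ≤ M := (abs_nonneg _).trans (S.abs_sigma_le 0)
  refine ⟨Real.exp (M * R) * L + M * C, fun s hs t ht => ?_⟩
  have hle : |t - s| ≤ |t - s| ^ lam := by
    refine Real.self_le_rpow_of_le_one (abs_nonneg _) ?_ hlam1.le
    exact abs_le.2 ⟨by linarith [hs.2, ht.1], by linarith [hs.1, ht.2]⟩
  have h1 : |φ (a t) (g t) - φ (a s) (g t)| ≤ Real.exp (M * R) * (L * |t - s| ^ lam) := by
    refine (abs_flow_sub_flow_le S.hasDerivAt_sigma S.continuous_deriv S.abs_deriv_le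
      S.flow_zero S.hasDerivAt_flow _ _ _).trans ?_
    have hat : |a t - a s| ≤ L * |t - s| := by
      simpa [Real.dist_eq] using ha.dist_le_mul t ht s hs
    have hgt : |g t| ≤ R := by
      rw [hgG ht]
      exact abs_le.2 (hR t ht)
    gcongr
    exact hat.trans (by gcongr)
  have h2 : |φ (a s) (g t) - φ (a s) (g s)| ≤ M * (C * |t - s| ^ lam) :=
    (S.abs_flow_sub_le_right _ _ _).trans (by gcongr; exact hg s hs t ht)
  calc _ ≤ _ := abs_sub_le _ (φ (a s) (g t)) _
    _ ≤ _ := add_le_add h1 h2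
    _ = _ := by ring

/-- Every solution of class `𝔠` is the Doss–Sussmann function. -/
lemma exists_flow_eq (S : FlowSetting b σ φ M K) {y g : ℝ → ℝ} {C lam ξ : ℝ}
    (hy : InClassC lam g y) (hgc : Continuous g)
    (hg : ∀ s t, |g t - g s| ≤ C * |t - s| ^ lam) (hg0 : g 0 = 0) (hlam : 1 / 3 < lam)
    (hsol : SolvesSymmEq b σ ξ g y) :
    ∃ z : ℝ → ℝ, Continuous z ∧ EqOn y (fun t => φ (z t) (g t)) (Icc 0 1) ∧
      ∀ t ∈ Icc (0:ℝ) 1, z t = ξ + ∫ u in (0:ℝ)..t, fsb b σ φ (z u) (g u) := by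
  obtain ⟨-, f, k, L, hf, hk, hyf⟩ := hy
  obtain ⟨k', hk', hkk'⟩ := hk.extend_real
  have hyf' : EqOn y (fun t => f (k' t) (g t)) (Icc 0 1) := fun t ht => by
    simp only [hyf t ht, hkk' ht]
  obtain ⟨L', hL', hlip⟩ := S.exists_abs_flow_neg_sub_le hf hk' hgc hg hlam
    (hsol.congr hyf' fun _ _ => rfl)
  have hzL : LipschitzOnWith L'.toNNReal (fun t => φ (f (k' t) (g t)) (-g t)) (Icc 0 1) :=
    LipschitzOnWith.of_dist_le_mul fun t ht s hs => by
      rw [Real.dist_eq, Real.dist_eq, Real.coe_toNNReal _ hL']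
      exact hlip s hs t ht
  obtain ⟨z, hz, hzz⟩ := hzL.extend_real
  have hyz : EqOn y (fun t => φ (z t) (g t)) (Icc 0 1) := fun t ht => by
    simp only [← hzz ht, flow_add S.one_le_K S.lipschitz S.flow_zero S.hasDerivAt_flow,
      neg_add_cancel, S.flow_zero]
    exact hyf' ht
  exact ⟨z, hz.continuous, hyz, S.integral_eq_of_hasSymmInt hz hgc hg hg0 hlam
    (hsol.congr hyz fun _ _ => rfl)⟩

end FlowSetting

lemma InClassC.congr {lam : ℝ} {g g' y : ℝ → ℝ} (h : InClassC lam g y)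
    (hg : EqOn g g' (Icc 0 1)) : InClassC lam g' y := by
  obtain ⟨hy, f, k, L, hf, hk, hyf⟩ := h
  exact ⟨hy, f, k, L, hf, hk, fun t ht => by rw [hyf t ht, hg ht]⟩

end

theorem stmt6
    (lam : ℝ) (hlam1 : 1/3 < lam) (hlam2 : lam < 1)
    (g : ℝ → ℝ) (Cg : ℝ)
    (hg : ∀ s ∈ Set.Icc (0:ℝ) 1, ∀ t ∈ Set.Icc (0:ℝ) 1, |g t - g s| ≤ Cg * |t - s| ^ lam)
    (hg0 : g 0 = 0)
    (ξ : ℝ) (b σ : ℝ → ℝ) (hb : CbN 1 b) (hσ : CbN 2 σ)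
    (φ : ℝ → ℝ → ℝ) (hφ : ∀ α β : ℝ, φ α β = α + ∫ η in (0:ℝ)..β, σ (φ α η))
    (a : ℝ → ℝ) (hacont : Continuous a)
    (ha : ∀ t : ℝ, a t = ξ + ∫ u in (0:ℝ)..t, fsb b σ φ (a u) (g u)) :
    (∀ t ∈ Set.Icc (0:ℝ) 1, ∃ I : ℝ,
      HasSymmInt (fun u => σ (φ (a u) (g u))) g t I ∧
      φ (a t) (g t) = ξ + (∫ u in (0:ℝ)..t, b (φ (a u) (g u))) + I) ∧
    InClassC lam g (fun t => φ (a t) (g t)) ∧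
    (∀ y : ℝ → ℝ, InClassC lam g y →
      (∀ t ∈ Set.Icc (0:ℝ) 1, ∃ I : ℝ,
        HasSymmInt (fun u => σ (y u)) g t I ∧
        y t = ξ + (∫ u in (0:ℝ)..t, b (y u)) + I) →
      ∀ t ∈ Set.Icc (0:ℝ) 1, y t = φ (a t) (g t)) := by
  have hlam0 : 0 < lam := by linarith
  obtain ⟨G, hGc, hG, hgG⟩ := exists_holder_extension hlam0 hg
  obtain ⟨M, K, S⟩ := exists_flowSetting hb hσ hφ
  have hG0 : G 0 = 0 := by rw [← hgG (by simp), hg0]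
  have haG : ∀ t ∈ Set.Icc (0:ℝ) 1, a t = ξ + ∫ u in (0:ℝ)..t, fsb b σ φ (a u) (G u) := by
    intro t ht
    rw [ha t]
    congr 1
    refine intervalIntegral.integral_congr fun u hu => ?_
    rw [Set.uIcc_of_le ht.1] at hu
    simp only [hgG (Set.Icc_subset_Icc_right ht.2 hu)]
  obtain ⟨L, hL⟩ := lipschitzOnWith_of_integral_eq
    (S.continuous_fsb.comp (hacont.prodMk hGc)) haG
  obtain ⟨k, hk, hak⟩ := hL.extend_real
  have hke : ∀ t ∈ Set.Icc (0:ℝ) 1, k t = ξ + ∫ u in (0:ℝ)..t, fsb b σ φ (k u) (G u) := by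
    intro t ht
    rw [← hak ht, haG t ht]
    congr 1
    refine intervalIntegral.integral_congr fun u hu => ?_
    rw [Set.uIcc_of_le ht.1] at hu
    simp only [hak (Set.Icc_subset_Icc_right ht.2 hu)]
  refine ⟨?_, S.inClassC_flow hL hlam0 hlam2 hg, fun y hy hsol t ht => ?_⟩
  · exact (S.solvesSymmEq_flow hk hGc hG hG0 hlam1 hke).congr
      (fun t ht => by simp only [hak ht, hgG ht]) hgG.symm
  · obtain ⟨z, hzc, hyz, hze⟩ := S.exists_flow_eq (hy.congr hgG) hGc hG hG0 hlam1
      (SolvesSymmEq.congr hsol (fun _ _ => rfl) hgG)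
    rw [hyz ht, hgG ht, S.eqOn_of_integral_eq hacont hzc hGc haG hze ht]
end

section
/- Let 1/3 < λ < 1, g ∈ C^λ₀([0,1];ℝ), ξ ∈ ℝ, b ∈ C_b¹(ℝ;ℝ) and σ ∈ C_b²(ℝ;ℝ) with inf σ > 0. Define F(x) = ∫₀^x dη/σ(η), let G = F⁻¹ be its inverse (F is a bijection of ℝ since σ is bounded above and below by positive constants), set b̃ = (b/σ)∘G and y₀ = F(ξ), and let y : [0,1] → ℝ be the unique continuous solution of y_t = y₀ + ∫₀^t b̃(y_u) du + g_t. Then G(y_t) = x_t(ξ,g) for all t ∈ [0,1], where x_·(ξ,g) is the Doss–Sussmann solution. -/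
/-- `F(x) = ∫₀ˣ dη/σ(η)`. -/
noncomputable def Ffun (σ : ℝ → ℝ) (x : ℝ) : ℝ := ∫ η in (0:ℝ)..x, (σ η)⁻¹

open MeasureTheory Set

/-- The primitive `β ↦ ∫₀^β h` of an arbitrary bounded function is measurable: it is continuous on
the interval where `h` is integrable and vanishes elsewhere. -/
lemma measurable_primitive_of_bounded {h : ℝ → ℝ} {M : ℝ} (hM : ∀ η, |h η| ≤ M) :
    Measurable fun β : ℝ => ∫ η in (0:ℝ)..β, h η := by
  classical
  set S : Set ℝ := {β | IntervalIntegrable h volume 0 β}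
  have hS : S.OrdConnected := by
    refine ⟨fun x hx z hz w hw => ?_⟩
    have hxz : IntervalIntegrable h volume x z := hx.symm.trans hz
    have hxw : IntervalIntegrable h volume x w :=
      hxz.mono_set (uIcc_subset_uIcc left_mem_uIcc (Icc_subset_uIcc hw))
    exact IntervalIntegrable.trans hx hxw
  have hcont : ContinuousOn (fun β : ℝ => ∫ η in (0:ℝ)..β, h η) S := by
    refine (LipschitzOnWith.of_dist_le_mul (K := M.toNNReal) fun x hx z hz => ?_).continuousOn
    rw [Real.coe_toNNReal M ((abs_nonneg _).trans (hM 0)), Real.dist_eq,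
      intervalIntegral.integral_interval_sub_left hx hz, Real.dist_eq]
    exact intervalIntegral.norm_integral_le_of_norm_le_const (f := h) fun η _ => hM η
  have hpiece : (fun β : ℝ => ∫ η in (0:ℝ)..β, h η)
      = S.piecewise (fun β : ℝ => ∫ η in (0:ℝ)..β, h η) fun _ => 0 := by
    funext β
    by_cases hβ : β ∈ S
    · rw [piecewise_eq_of_mem _ _ _ hβ]
    · rw [piecewise_eq_of_notMem _ _ _ hβ]
      exact intervalIntegral.integral_undef hβ
  rw [hpiece]
  exact hcont.measurable_piecewise continuousOn_const hS.measurableSet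

/-- A solution `p` of the integral equation `p β = α + ∫₀^β σ(p)` with `σ` continuous and bounded
is differentiable, whatever the regularity of `p` assumed beforehand. -/
lemma hasDerivAt_of_integral_equation {σ p : ℝ → ℝ} {α M : ℝ} (hσ : Continuous σ)
    (hM : ∀ x, |σ x| ≤ M) (hp : ∀ β, p β = α + ∫ η in (0:ℝ)..β, σ (p η)) (β : ℝ) :
    HasDerivAt p (σ (p β)) β := by
  have hpeq : p = fun β => α + ∫ η in (0:ℝ)..β, σ (p η) := funext hp
  have hmeas : Measurable p := by
    rw [hpeq]
    exact (measurable_primitive_of_bounded fun η => hM (p η)).const_add α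
  have hint : ∀ x z : ℝ, IntervalIntegrable (fun η => σ (p η)) volume x z := fun x z =>
    (intervalIntegrable_const (c := M)).mono_fun
      (hσ.measurable.comp hmeas).aestronglyMeasurable
      (.of_forall fun η => (hM (p η)).trans (le_abs_self M))
  have hcont : Continuous p := by
    rw [hpeq]
    exact continuous_const.add (intervalIntegral.continuous_primitive hint 0)
  have hd := ((hσ.comp hcont).integral_hasStrictDerivAt 0 β).hasDerivAt.const_add α
  exact hd.congr_of_eventuallyEq (.of_forall hp)

lemma CbN.exists_bound {n : ℕ} {f : ℝ → ℝ} (hf : CbN n f) : ∃ M, ∀ x, |f x| ≤ M := by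
  simpa using hf.2 0 n.zero_le

lemma CbN.exists_bound_deriv {n : ℕ} {f : ℝ → ℝ} (hf : CbN n f) (hn : 1 ≤ n) :
    ∃ M, ∀ x, |deriv f x| ≤ M := by
  simpa using hf.2 1 hn

section Lamperti

variable {σ : ℝ → ℝ}

lemma hasDerivAt_Ffun (hσ : Continuous σ) (hpos : ∀ x, 0 < σ x) (x : ℝ) :
    HasDerivAt (Ffun σ) (σ x)⁻¹ x :=
  ((hσ.inv₀ fun x => (hpos x).ne').integral_hasStrictDerivAt 0 x).hasDerivAt

lemma strictMono_Ffun (hσ : Continuous σ) (hpos : ∀ x, 0 < σ x) : StrictMono (Ffun σ) :=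
  strictMono_of_deriv_pos fun x => by
    rw [(hasDerivAt_Ffun hσ hpos x).deriv]
    exact inv_pos.2 (hpos x)

lemma hasDerivAt_inverse_Ffun (hσ : Continuous σ) (hpos : ∀ x, 0 < σ x) {G : ℝ → ℝ}
    (hGl : Function.LeftInverse G (Ffun σ)) (hGr : Function.RightInverse G (Ffun σ)) (x : ℝ) :
    HasDerivAt G (σ (G x)) x := by
  have hmono : Monotone G := fun x z hxz =>
    (strictMono_Ffun hσ hpos).le_iff_le.1 (by rwa [hGr x, hGr z])
  have hcont : Continuous G := hmono.continuous_of_surjective hGl.surjective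
  simpa using HasDerivAt.of_local_left_inverse hcont.continuousAt (hasDerivAt_Ffun hσ hpos (G x))
    (inv_ne_zero (hpos _).ne') (.of_forall hGr)

/-- `F` straightens the flow of `σ`. -/
lemma Ffun_flow (hσ : Continuous σ) (hpos : ∀ x, 0 < σ x) {p : ℝ → ℝ}
    (hp : ∀ β, HasDerivAt p (σ (p β)) β) (β : ℝ) : Ffun σ (p β) = Ffun σ (p 0) + β := by
  have hd : ∀ β, HasDerivAt (fun β => Ffun σ (p β)) 1 β := fun β =>
    ((hasDerivAt_Ffun hσ hpos (p β)).comp β (hp β)).congr_deriv (inv_mul_cancel₀ (hpos _).ne')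
  have := intervalIntegral.integral_eq_sub_of_hasDerivAt (a := 0) (b := β)
    (fun x _ => hd x) intervalIntegrable_const
  rw [intervalIntegral.integral_const, smul_eq_mul, mul_one] at this
  linarith

lemma exp_neg_integral_deriv_flow (hσ : ContDiff ℝ 1 σ) (hpos : ∀ x, 0 < σ x) {p : ℝ → ℝ}
    (hp : ∀ β, HasDerivAt p (σ (p β)) β) (β : ℝ) :
    Real.exp (-∫ η in (0:ℝ)..β, deriv σ (p η)) = σ (p 0) / σ (p β) := by
  have hd : ∀ β, HasDerivAt (fun β => Real.log (σ (p β))) (deriv σ (p β)) β := fun β => by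
    have h := ((hσ.differentiable one_ne_zero (p β)).hasDerivAt.comp β (hp β)).log (hpos _).ne'
    simpa [(hpos (p β)).ne'] using h
  have hpc : Continuous p := continuous_iff_continuousAt.2 fun x => (hp x).continuousAt
  rw [intervalIntegral.integral_eq_sub_of_hasDerivAt (fun x _ => hd x)
    (((hσ.continuous_deriv le_rfl).comp hpc).intervalIntegrable 0 β), neg_sub, Real.exp_sub,
    Real.exp_log (hpos _), Real.exp_log (hpos _)]

/-- The transformed drift `(b / σ) ∘ G` is Lipschitz. -/
lemma exists_lipschitzWith_drift {b : ℝ → ℝ} (hb : CbN 1 b) (hσ : CbN 2 σ) {c : ℝ} (hc : 0 < c)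
    (hcσ : ∀ x, c ≤ σ x) {G : ℝ → ℝ} (hG : ∀ x, HasDerivAt G (σ (G x)) x) :
    ∃ K, LipschitzWith K fun x => b (G x) / σ (G x) := by
  obtain ⟨B, hB⟩ := hb.exists_bound
  obtain ⟨B', hB'⟩ := hb.exists_bound_deriv le_rfl
  obtain ⟨S', hS'⟩ := hσ.exists_bound_deriv one_le_two
  have hpos : ∀ x, 0 < σ x := fun x => hc.trans_le (hcσ x)
  have hd : ∀ x, HasDerivAt (fun x => b (G x) / σ (G x))
      (deriv b (G x) - b (G x) * deriv σ (G x) / σ (G x)) x := fun x => by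
    have hbx := (hb.1.differentiable one_ne_zero (G x)).hasDerivAt.comp x (hG x)
    have hσx := (hσ.1.differentiable two_ne_zero (G x)).hasDerivAt.comp x (hG x)
    refine (hbx.div hσx (hpos _).ne').congr_deriv ?_
    have := (hpos (G x)).ne'
    simp only [Function.comp_apply]
    field_simp
  refine ⟨(B' + B * S' / c).toNNReal, lipschitzWith_of_nnnorm_deriv_le
    (fun x => (hd x).differentiableAt) fun x => ?_⟩
  rw [(hd x).deriv]
  refine NNReal.le_toNNReal_of_coe_le ?_
  rw [coe_nnnorm, Real.norm_eq_abs]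
  refine (abs_sub _ _).trans (add_le_add (hB' _) ?_)
  rw [abs_div, abs_mul, abs_of_pos (hpos (G x))]
  have hB0 : 0 ≤ B := (abs_nonneg _).trans (hB 0)
  have hS0 : 0 ≤ S' := (abs_nonneg _).trans (hS' 0)
  gcongr
  exacts [hB _, hS' _, hcσ _]

end Lamperti

theorem stmt9
    (lam : ℝ) (hlam1 : 1/3 < lam) (hlam2 : lam < 1)
    (g : ℝ → ℝ) (Cg : ℝ)
    (hg : ∀ s ∈ Set.Icc (0:ℝ) 1, ∀ t ∈ Set.Icc (0:ℝ) 1, |g t - g s| ≤ Cg * |t - s| ^ lam)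
    (hg0 : g 0 = 0)
    (ξ : ℝ) (b σ : ℝ → ℝ) (hb : CbN 1 b) (hσ : CbN 2 σ)
    (hσpos : ∃ c : ℝ, 0 < c ∧ ∀ x : ℝ, c ≤ σ x)
    (φ : ℝ → ℝ → ℝ) (hφ : ∀ α β : ℝ, φ α β = α + ∫ η in (0:ℝ)..β, σ (φ α η))
    (a : ℝ → ℝ) (hacont : Continuous a)
    (ha : ∀ t : ℝ, a t = ξ + ∫ u in (0:ℝ)..t, fsb b σ φ (a u) (g u))
    -- `G = F⁻¹`, the inverse of the bijection `F`
    (G : ℝ → ℝ)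
    (hGl : Function.LeftInverse G (Ffun σ)) (hGr : Function.RightInverse G (Ffun σ))
    -- `y`, the unique continuous solution of `y_t = F(ξ) + ∫₀ᵗ b̃(y_u) du + g_t`
    -- where `b̃ = (b/σ) ∘ G`
    (y : ℝ → ℝ) (hycont : Continuous y)
    (hy : ∀ t : ℝ,
      y t = Ffun σ ξ + (∫ u in (0:ℝ)..t, b (G (y u)) / σ (G (y u))) + g t) :
    ∀ t ∈ Set.Icc (0:ℝ) 1, G (y t) = φ (a t) (g t) := by
  obtain ⟨c, hc, hcσ⟩ := hσpos
  have hpos : ∀ x, 0 < σ x := fun x => hc.trans_le (hcσ x)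
  have hσc : Continuous σ := hσ.1.continuous
  have hσ1 : ContDiff ℝ 1 σ := hσ.1.of_le (by norm_num)
  obtain ⟨M, hM⟩ := hσ.exists_bound
  have hφd : ∀ α β, HasDerivAt (φ α) (σ (φ α β)) β := fun α =>
    hasDerivAt_of_integral_equation hσc hM (hφ α)
  have hφ0 : ∀ α, φ α 0 = α := fun α => by simpa using hφ α 0
  have hφG : ∀ α β, φ α β = G (Ffun σ α + β) := fun α β => by
    have h := Ffun_flow hσc hpos (hφd α) β
    rw [hφ0] at h
    rw [← h, hGl]
  have hGd := hasDerivAt_inverse_Ffun hσc hpos hGl hGr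
  have hGc : Continuous G := continuous_iff_continuousAt.2 fun x => (hGd x).continuousAt
  have hFc : Continuous (Ffun σ) :=
    continuous_iff_continuousAt.2 fun x => (hasDerivAt_Ffun hσc hpos x).continuousAt
  obtain ⟨K, hK⟩ := exists_lipschitzWith_drift hb hσ hc hcσ hGd
  have hwd : ∀ t, HasDerivAt (fun t => y t - g t) (b (G (y t)) / σ (G (y t))) t := fun t => by
    have h := ((hK.continuous.comp hycont).integral_hasStrictDerivAt 0 t).hasDerivAt.const_add
      (Ffun σ ξ)
    refine h.congr_of_eventuallyEq (.of_forall fun s => ?_)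
    exact sub_eq_iff_eq_add.2 (hy s)
  have hgc : Continuous g := by
    have hw : Continuous fun t => y t - g t :=
      continuous_iff_continuousAt.2 fun t => (hwd t).continuousAt
    exact (hycont.sub hw).congr fun t => sub_sub_cancel _ _
  have hfsb : ∀ x z, fsb b σ φ x z
      = σ x * (b (G (Ffun σ x + z)) / σ (G (Ffun σ x + z))) := fun x z => by
    rw [fsb, exp_neg_integral_deriv_flow hσ1 hpos (hφd x), hφ0, hφG]
    ring
  have hac : Continuous fun u => fsb b σ φ (a u) (g u) := by
    simp only [hfsb]
    exact (hσc.comp hacont).mul (hK.continuous.comp ((hFc.comp hacont).add hgc))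
  have hzd : ∀ t, HasDerivAt (fun t => Ffun σ (a t))
      (b (G (Ffun σ (a t) + g t)) / σ (G (Ffun σ (a t) + g t))) t := fun t => by
    have had : HasDerivAt a (fsb b σ φ (a t) (g t)) t :=
      ((hac.integral_hasStrictDerivAt 0 t).hasDerivAt.const_add ξ).congr_of_eventuallyEq
        (.of_forall ha)
    refine ((hasDerivAt_Ffun hσc hpos (a t)).comp t had).congr_deriv ?_
    rw [hfsb, inv_mul_cancel_left₀ (hpos _).ne']
  have hEq : (fun t => Ffun σ (a t)) = fun t => y t - g t := by
    refine ODE_solution_unique_univ (t₀ := 0) (s := fun _ => univ) (K := K)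
      (v := fun t z => b (G (z + g t)) / σ (G (z + g t))) (fun t => ?_)
      (fun t => ⟨hzd t, mem_univ _⟩) (fun t => ⟨?_, mem_univ _⟩) ?_
    · refine (LipschitzWith.of_dist_le_mul fun x z => ?_).lipschitzOnWith
      simpa using hK.dist_le_mul (x + g t) (z + g t)
    · simpa using hwd t
    · simp [ha 0, hy 0, hg0]
  intro t _
  rw [hφG, congrFun hEq t, sub_add_cancel]
end

section
/- Let 0 < H < 1. Define b₂(x,s,y,t) = 2(xy − xt − sy + st) and b₃(x,s,y,t) = 3(x²y − xy² − x²t + xt² − s²y + sy² + s²t − st²), and let C(2H,2) = 2H(2H−1)/2 and C(2H,3) = 2H(2H−1)(2H−2)/6 denote generalized binomial coefficients. Then there exists a constant C > 0 depending only on H such that for all 0 ≤ x, s, y, t ≤ 1 and all k, l ∈ ℕ with |k−l| ≥ 2: |D_H(s+k−1, x+k−1; t+l−1, y+l−1) − (1/2)|k−l|^{2H}·( C(2H,2)·b₂(x,s,y,t)/(k−l)² + C(2H,3)·b₃(x,s,y,t)/(k−l)³ )| ≤ C·|k−l|^{2H−4}. -/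
/-- `D_H(s,t;u,v) = (1/2)(|t−u|^{2H} + |s−v|^{2H} − |t−v|^{2H} − |s−u|^{2H})`,
the covariance `E[(B_t−B_s)(B_v−B_u)]` of increments of fractional Brownian motion. -/
noncomputable def DH (H s t u v : ℝ) : ℝ :=
  (1/2) * (|t - u| ^ (2*H) + |s - v| ^ (2*H) - |t - v| ^ (2*H) - |s - u| ^ (2*H))

/-- `b₂(x,s,y,t) = 2(xy − xt − sy + st)`. -/
def bb2 (x s y t : ℝ) : ℝ := 2 * (x*y - x*t - s*y + s*t)

/-- `b₃(x,s,y,t) = 3(x²y − xy² − x²t + xt² − s²y + sy² + s²t − st²)`. -/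
def bb3 (x s y t : ℝ) : ℝ :=
  3 * (x^2*y - x*y^2 - x^2*t + x*t^2 - s^2*y + s*y^2 + s^2*t - s*t^2)

/-- Third-order Taylor estimate for `(1 + z) ^ p`, uniform on `[-1/2, 1/2]`. -/
theorem exists_abs_one_add_rpow_sub_le (p : ℝ) :
    ∃ K : ℝ, 0 < K ∧ ∀ z : ℝ, |z| ≤ 1 / 2 →
      |(1 + z) ^ p - (1 + p * z + p * (p - 1) / 2 * z ^ 2
        + p * (p - 1) * (p - 2) / 6 * z ^ 3)| ≤ K * z ^ 4 := by
  obtain ⟨a, ha, K, hK, h⟩ :=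
    (Real.one_add_rpow_hasFPowerSeriesOnBall_zero (a := p)).uniform_geometric_approx'
      (r' := 3 / 4) (by
        rw [← ENNReal.coe_one, ENNReal.coe_lt_coe, ← NNReal.coe_lt_coe]
        norm_num)
  have ha0 : 0 < a := ha.1
  have h2 : Ring.choose p 2 = p * (p - 1) / 2 := by
    simp [Ring.choose_eq_smul, descPochhammer_succ_right, ← Polynomial.aeval_eq_smeval]
    ring
  have h3 : Ring.choose p 3 = p * (p - 1) * (p - 2) / 6 := by
    simp [Ring.choose_eq_smul, descPochhammer_succ_right, ← Polynomial.aeval_eq_smeval,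
      map_ofNat, Nat.factorial]
    ring
  refine ⟨K * (a * (4 / 3)) ^ 4, by positivity, fun z hz => ?_⟩
  have hb : z ∈ Metric.ball (0 : ℝ) ((3 / 4 : NNReal) : ℝ) := by
    rw [mem_ball_zero_iff, Real.norm_eq_abs]
    push_cast
    linarith
  have hz4 := h z hb 4
  simp only [FormalMultilinearSeries.partialSum, Finset.sum_range_succ, Finset.sum_range_zero,
    binomialSeries_apply, zero_add, Real.norm_eq_abs, List.ofFn_const, List.prod_replicate,
    Ring.choose_zero_right, Ring.choose_one_right, h2, h3, smul_eq_mul, pow_zero, pow_one,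
    mul_one] at hz4
  refine hz4.trans (le_of_eq ?_)
  rw [← (show Even 4 by decide).pow_abs z]
  push_cast
  ring

/-- Scaling of `|·| ^ p` around a nonzero base point. -/
theorem abs_add_rpow_eq_mul {a d : ℝ} (p : ℝ) (ha : a ≠ 0) (hd : |d / a| ≤ 1 / 2) :
    |a + d| ^ p = |a| ^ p * (1 + d / a) ^ p := by
  have h1 : 0 ≤ 1 + d / a := by linarith [(abs_le.mp hd).1]
  rw [← Real.mul_rpow (abs_nonneg a) h1, ← abs_of_nonneg h1, ← abs_mul]
  congr 2
  field_simp

theorem stmt16 (H : ℝ) (hH0 : 0 < H) (hH1 : H < 1) :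
    ∃ C : ℝ, 0 < C ∧
      ∀ x s y t : ℝ,
        x ∈ Set.Icc (0:ℝ) 1 → s ∈ Set.Icc (0:ℝ) 1 →
        y ∈ Set.Icc (0:ℝ) 1 → t ∈ Set.Icc (0:ℝ) 1 →
        ∀ k l : ℕ, 1 ≤ k → 1 ≤ l → 2 ≤ |(k:ℝ) - (l:ℝ)| →
          |DH H (s + (k:ℝ) - 1) (x + (k:ℝ) - 1) (t + (l:ℝ) - 1) (y + (l:ℝ) - 1)
            - (1/2) * |(k:ℝ) - (l:ℝ)| ^ (2*H) *
              ((2*H*(2*H - 1)/2) * bb2 x s y t / ((k:ℝ) - (l:ℝ))^2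
                + (2*H*(2*H - 1)*(2*H - 2)/6) * bb3 x s y t / ((k:ℝ) - (l:ℝ))^3)|
          ≤ C * |(k:ℝ) - (l:ℝ)| ^ (2*H - 4) := by
  obtain ⟨K, hK, hT⟩ := exists_abs_one_add_rpow_sub_le (2 * H)
  refine ⟨2 * K, by positivity, ?_⟩
  rintro x s y t ⟨hx0, hx1⟩ ⟨hs0, hs1⟩ ⟨hy0, hy1⟩ ⟨ht0, ht1⟩ k l - - hkl
  rw [DH, bb2, bb3,
    show x + (k : ℝ) - 1 - (t + l - 1) = (k - l : ℝ) + (x - t) by ring,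
    show s + (k : ℝ) - 1 - (y + l - 1) = (k - l : ℝ) + (s - y) by ring,
    show x + (k : ℝ) - 1 - (y + l - 1) = (k - l : ℝ) + (x - y) by ring,
    show s + (k : ℝ) - 1 - (t + l - 1) = (k - l : ℝ) + (s - t) by ring]
  generalize (k : ℝ) - (l : ℝ) = a at hkl ⊢
  have hapos : 0 < |a| := by linarith
  have ha : a ≠ 0 := abs_pos.mp hapos
  have ratio_le : ∀ d : ℝ, |d| ≤ 1 → |d / a| ≤ 1 / 2 := fun d hd => by
    rw [abs_div, div_le_iff₀ hapos]
    linarith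
  have remainder_le : ∀ d : ℝ, |d| ≤ 1 →
      |(1 + d / a) ^ (2 * H) - (1 + 2 * H * (d / a) + 2 * H * (2 * H - 1) / 2 * (d / a) ^ 2
        + 2 * H * (2 * H - 1) * (2 * H - 2) / 6 * (d / a) ^ 3)| ≤ K / a ^ 4 := fun d hd => by
    refine (hT _ (ratio_le d hd)).trans ?_
    have hd4 : d ^ 4 ≤ 1 := by
      rw [← (show Even 4 by decide).pow_abs d]
      exact pow_le_one₀ (abs_nonneg d) hd
    rw [div_pow, ← mul_div_assoc]
    gcongr
    nlinarith
  have hxt : |x - t| ≤ 1 := abs_le.mpr ⟨by linarith, by linarith⟩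
  have hsy : |s - y| ≤ 1 := abs_le.mpr ⟨by linarith, by linarith⟩
  have hxy : |x - y| ≤ 1 := abs_le.mpr ⟨by linarith, by linarith⟩
  have hst : |s - t| ≤ 1 := abs_le.mpr ⟨by linarith, by linarith⟩
  rw [abs_add_rpow_eq_mul _ ha (ratio_le _ hxt), abs_add_rpow_eq_mul _ ha (ratio_le _ hsy),
    abs_add_rpow_eq_mul _ ha (ratio_le _ hxy), abs_add_rpow_eq_mul _ ha (ratio_le _ hst)]
  have hpow : |a| ^ (2 * H - 4) = |a| ^ (2 * H) / a ^ 4 := by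
    rw [Real.rpow_sub hapos, show (4 : ℝ) = ((4 : ℕ) : ℝ) by norm_num, Real.rpow_natCast,
      (show Even 4 by decide).pow_abs]
  rw [hpow]
  have r1 := abs_le.mp (remainder_le _ hxt)
  have r2 := abs_le.mp (remainder_le _ hsy)
  have r3 := abs_le.mp (remainder_le _ hxy)
  have r4 := abs_le.mp (remainder_le _ hst)
  generalize (1 + (x - t) / a) ^ (2 * H) = A₁ at r1 ⊢
  generalize (1 + (s - y) / a) ^ (2 * H) = A₂ at r2 ⊢
  generalize (1 + (x - y) / a) ^ (2 * H) = A₃ at r3 ⊢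
  generalize (1 + (s - t) / a) ^ (2 * H) = A₄ at r4 ⊢
  have hP : 0 ≤ |a| ^ (2 * H) := by positivity
  generalize |a| ^ (2 * H) = P at hP ⊢
  set q : ℝ → ℝ := fun d => 1 + 2 * H * (d / a) + 2 * H * (2 * H - 1) / 2 * (d / a) ^ 2
        + 2 * H * (2 * H - 1) * (2 * H - 2) / 6 * (d / a) ^ 3 with hq
  have key : 1 / 2 * (P * A₁ + P * A₂ - P * A₃ - P * A₄) - 1 / 2 * P *
      (2 * H * (2 * H - 1) / 2 * (2 * (x * y - x * t - s * y + s * t)) / a ^ 2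
        + 2 * H * (2 * H - 1) * (2 * H - 2) / 6 * (3 * (x ^ 2 * y - x * y ^ 2 - x ^ 2 * t
          + x * t ^ 2 - s ^ 2 * y + s * y ^ 2 + s ^ 2 * t - s * t ^ 2)) / a ^ 3)
      = P * (1 / 2 * ((A₁ - q (x - t)) + (A₂ - q (s - y)) - (A₃ - q (x - y))
        - (A₄ - q (s - t)))) := by
    simp only [hq]
    ring
  rw [key, abs_mul, abs_of_nonneg hP, show 2 * K * (P / a ^ 4) = P * (2 * (K / a ^ 4)) by ring]
  refine mul_le_mul_of_nonneg_left (abs_le.mpr ⟨?_, ?_⟩) hP <;> simp only [hq] <;> linarith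
end

section
/- Let 0 < H < 1. Then there exists a constant C > 0 depending only on H such that for all integers k, l ≥ 1: |a†_{k,l}| ≤ C·|k−l|^{2H−3} whenever |k−l| ≥ 1, and |a†_{k,k}| ≤ C. -/
/-- `a†_{k,l} = E[(B_k−B_{k−1})·((1/2)(B_l−B_{l−1}) − ∫_{l−1}^l (B_u−B_{l−1})du)]`,
expressed through `D_H`. -/
noncomputable def adag (H : ℝ) (k l : ℕ) : ℝ :=
  (1/2) * DH H ((k:ℝ) - 1) (k:ℝ) ((l:ℝ) - 1) (l:ℝ)
  - ∫ u in (0:ℝ)..1, DH H ((k:ℝ) - 1) (k:ℝ) ((l:ℝ) - 1) ((l:ℝ) - 1 + u)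

open Set MeasureTheory

theorem abs_trapezoid_sub_integral_le {f f' f'' : ℝ → ℝ} {a ζ : ℝ}
    (hf : ∀ x ∈ Icc a (a + 1), HasDerivAt f (f' x) x)
    (hf' : ∀ x ∈ Icc a (a + 1), HasDerivAt f' (f'' x) x)
    (hζ : ∀ x ∈ Icc a (a + 1), |f'' x| ≤ ζ) :
    |(f a + f (a + 1)) / 2 - ∫ x in a..(a + 1), f x| ≤ ζ := by
  have hlt : a < a + 1 := by linarith
  have hu : UniqueDiffOn ℝ (Icc a (a + 1)) := uniqueDiffOn_Icc hlt
  have hζ0 : 0 ≤ ζ := (abs_nonneg _).trans (hζ a (left_mem_Icc.2 hlt.le))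
  have hd : ∀ x ∈ Icc a (a + 1), derivWithin f (Icc a (a + 1)) x = f' x := fun x hx =>
    (hf x hx).hasDerivWithinAt.derivWithin (hu x hx)
  have hdd : ∀ x ∈ Icc a (a + 1),
      HasDerivWithinAt (derivWithin f (Icc a (a + 1))) (f'' x) (Icc a (a + 1)) x := fun x hx =>
    (hf' x hx).hasDerivWithinAt.congr hd (hd x hx)
  have key := trapezoidal_error_le (f := f) (a := a) (b := a + 1) (ζ := ζ) (N := 1)
    (by
      rw [uIcc_of_le hlt.le]
      exact fun x hx => (hf x hx).hasDerivWithinAt.differentiableWithinAt)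
    (by
      rw [uIcc_of_le hlt.le]
      exact fun x hx => (hdd x hx).differentiableWithinAt)
    (by
      rw [uIcc_of_le hlt.le]
      intro x
      rw [iteratedDerivWithin_succ, iteratedDerivWithin_one]
      by_cases hx : x ∈ Icc a (a + 1)
      · rw [(hdd x hx).derivWithin (hu x hx)]
        exact hζ x hx
      · rw [derivWithin_zero_of_notMem_closure (by rwa [isClosed_Icc.closure_eq])]
        simpa using hζ0)
    one_pos
  rw [trapezoidal_error, trapezoidal_integral_one] at key
  norm_num at key
  calc _ = |1 / 2 * (f a + f (a + 1)) - ∫ x in a..(a + 1), f x| := by ring_nf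
    _ ≤ ζ / 12 := key
    _ ≤ ζ := by linarith

theorem abs_rpow_add_one_sub_rpow_le {q x : ℝ} (hq : q ≤ 1) (hx : 0 < x) :
    |(x + 1) ^ q - x ^ q| ≤ |q| * x ^ (q - 1) := by
  have h := (convex_Icc x (x + 1)).norm_image_sub_le_of_norm_hasDerivWithin_le
    (f := fun y : ℝ => y ^ q) (f' := fun y => q * y ^ (q - 1)) (C := |q| * x ^ (q - 1))
    (x := x) (y := x + 1)
    (fun y hy => (Real.hasDerivAt_rpow_const
      (Or.inl (hx.trans_le hy.1).ne')).hasDerivWithinAt)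
    (fun y hy => by
      rw [norm_mul, Real.norm_eq_abs, Real.norm_eq_abs,
        abs_of_nonneg (Real.rpow_nonneg (hx.le.trans hy.1) _)]
      exact mul_le_mul_of_nonneg_left
        (Real.rpow_le_rpow_of_nonpos hx hy.1 (by linarith)) (abs_nonneg q))
    (by simp) (by simp)
  simpa using h

/-- The error of the one-step trapezoidal rule on `[a, a + 1]` for `x ↦ (x + 1) ^ p - x ^ p`. -/
noncomputable def trapezoidErrorRpowDiff (p a : ℝ) : ℝ :=
  (((a + 1) ^ p - a ^ p) + ((a + 1 + 1) ^ p - (a + 1) ^ p)) / 2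
    - ∫ x in a..(a + 1), ((x + 1) ^ p - x ^ p)

theorem abs_trapezoidErrorRpowDiff_le {p a : ℝ} (hp : p ≤ 3) (ha : 0 < a) :
    |trapezoidErrorRpowDiff p a| ≤ |p * (p - 1) * (p - 2)| * a ^ (p - 3) := by
  have hder : ∀ q x : ℝ, 0 < x →
      HasDerivAt (fun y : ℝ => (y + 1) ^ q - y ^ q)
        (q * ((x + 1) ^ (q - 1) - x ^ (q - 1))) x := by
    intro q x hx
    have h1 := ((hasDerivAt_id x).add_const 1).rpow_const (p := q)
      (Or.inl (by simp only [id]; linarith))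
    have h2 := Real.hasDerivAt_rpow_const (x := x) (p := q) (Or.inl hx.ne')
    refine (h1.sub h2).congr_deriv ?_
    simp only [id]
    ring
  refine abs_trapezoid_sub_integral_le (f := fun x : ℝ => (x + 1) ^ p - x ^ p)
    (f' := fun x => p * ((x + 1) ^ (p - 1) - x ^ (p - 1)))
    (f'' := fun x => p * ((p - 1) * ((x + 1) ^ (p - 1 - 1) - x ^ (p - 1 - 1))))
    (fun x hx => hder p x (ha.trans_le hx.1))
    (fun x hx => (hder (p - 1) x (ha.trans_le hx.1)).const_mul p) (fun x hx => ?_)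
  have hx0 : 0 < x := ha.trans_le hx.1
  have h := abs_rpow_add_one_sub_rpow_le (q := p - 1 - 1) (by linarith) hx0
  have hmono : x ^ (p - 1 - 1 - 1) ≤ a ^ (p - 1 - 1 - 1) :=
    Real.rpow_le_rpow_of_nonpos ha hx.1 (by linarith)
  rw [show p - 3 = p - 1 - 1 - 1 by ring, show p - 2 = p - 1 - 1 by ring, ← mul_assoc, abs_mul,
    abs_mul _ (p - 1 - 1), mul_assoc]
  exact mul_le_mul_of_nonneg_left
    (h.trans (mul_le_mul_of_nonneg_left hmono (abs_nonneg _))) (abs_nonneg _)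

theorem intervalIntegrable_rpow_add_one_sub_rpow {p a b : ℝ} (ha : 0 < a) (hb : 0 < b) :
    IntervalIntegrable (fun x : ℝ => (x + 1) ^ p - x ^ p) volume a b := by
  refine ContinuousOn.intervalIntegrable fun x hx => ContinuousAt.continuousWithinAt ?_
  have hx0 : 0 < x := (lt_min ha hb).trans_le hx.1
  exact ((continuousAt_id.add continuousAt_const).rpow_const
    (Or.inl (add_pos hx0 one_pos).ne')).sub
    (Real.continuousAt_rpow_const _ _ (Or.inl hx0.ne'))

theorem adag_of_sub_eq {H n : ℝ} {k l : ℕ} (h : (k : ℝ) - l = n) (hn : 1 < n) :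
    adag H k l = -(1 / 2) * trapezoidErrorRpowDiff (2 * H) (n - 1) := by
  have hk : (k : ℝ) = l + n := by linarith
  have hD : ∀ u ∈ Icc (0 : ℝ) 1, DH H ((k : ℝ) - 1) k ((l : ℝ) - 1) ((l : ℝ) - 1 + u) =
      (1 / 2) * (((n + 1) ^ (2 * H) - n ^ (2 * H))
        - ((n - u + 1) ^ (2 * H) - (n - u) ^ (2 * H))) := by
    intro u hu
    obtain ⟨hu0, hu1⟩ := hu
    rw [DH, hk, show (l : ℝ) + n - (l - 1) = n + 1 by ring,
      show (l : ℝ) + n - 1 - (l - 1 + u) = n - u by ring,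
      show (l : ℝ) + n - (l - 1 + u) = n - u + 1 by ring,
      show (l : ℝ) + n - 1 - (l - 1) = n by ring,
      abs_of_pos (by linarith : 0 < n + 1), abs_of_pos (by linarith : 0 < n - u),
      abs_of_pos (by linarith : 0 < n - u + 1), abs_of_pos (by linarith : 0 < n)]
    ring
  have hint : IntervalIntegrable (fun u : ℝ => (n - u + 1) ^ (2 * H) - (n - u) ^ (2 * H))
      volume 0 1 := by
    have := (intervalIntegrable_rpow_add_one_sub_rpow (p := 2 * H) (a := n) (b := n - 1)
      (by linarith) (by linarith)).comp_sub_left n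
    simpa using this
  have hl := hD 1 (by simp)
  rw [show (l : ℝ) - 1 + 1 = l by ring] at hl
  rw [adag, hl, intervalIntegral.integral_congr
      (fun u hu => hD u (by rwa [uIcc_of_le zero_le_one] at hu)),
    intervalIntegral.integral_const_mul, intervalIntegral.integral_sub (by simp) hint,
    intervalIntegral.integral_comp_sub_left (fun x : ℝ => (x + 1) ^ (2 * H) - x ^ (2 * H)) n,
    trapezoidErrorRpowDiff]
  simp only [intervalIntegral.integral_const, sub_zero, smul_eq_mul, sub_add_cancel]
  ring

theorem adag_of_sub_eq_neg {H n : ℝ} {k l : ℕ} (h : (k : ℝ) - l = -n) (hn : 1 < n) :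
    adag H k l = (1 / 2) * trapezoidErrorRpowDiff (2 * H) (n - 1) := by
  have hk : (k : ℝ) = l - n := by linarith
  have hD : ∀ u ∈ Icc (0 : ℝ) 1, DH H ((k : ℝ) - 1) k ((l : ℝ) - 1) ((l : ℝ) - 1 + u) =
      (1 / 2) * (((n - 1 + u + 1) ^ (2 * H) - (n - 1 + u) ^ (2 * H))
        - (n ^ (2 * H) - (n - 1) ^ (2 * H))) := by
    intro u hu
    obtain ⟨hu0, hu1⟩ := hu
    rw [DH, hk, show (l : ℝ) - n - (l - 1) = -(n - 1) by ring,
      show (l : ℝ) - n - 1 - (l - 1 + u) = -(n - 1 + u + 1) by ring,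
      show (l : ℝ) - n - (l - 1 + u) = -(n - 1 + u) by ring,
      show (l : ℝ) - n - 1 - (l - 1) = -n by ring, abs_neg, abs_neg, abs_neg, abs_neg,
      abs_of_pos (by linarith : 0 < n - 1), abs_of_pos (by linarith : 0 < n - 1 + u + 1),
      abs_of_pos (by linarith : 0 < n - 1 + u), abs_of_pos (by linarith : 0 < n)]
    ring
  have hint : IntervalIntegrable
      (fun u : ℝ => (n - 1 + u + 1) ^ (2 * H) - (n - 1 + u) ^ (2 * H)) volume 0 1 := by
    have := (intervalIntegrable_rpow_add_one_sub_rpow (p := 2 * H) (a := n - 1) (b := n)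
      (by linarith) (by linarith)).comp_add_left (n - 1)
    simpa using this
  have hl := hD 1 (by simp)
  rw [show (l : ℝ) - 1 + 1 = l by ring] at hl
  rw [adag, hl, intervalIntegral.integral_congr
      (fun u hu => hD u (by rwa [uIcc_of_le zero_le_one] at hu)),
    intervalIntegral.integral_const_mul, intervalIntegral.integral_sub hint (by simp),
    intervalIntegral.integral_comp_add_left
      (fun x : ℝ => (x + 1) ^ (2 * H) - x ^ (2 * H)) (n - 1),
    trapezoidErrorRpowDiff]
  simp only [intervalIntegral.integral_const, sub_zero, smul_eq_mul, sub_add_cancel, add_zero]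
  ring

theorem abs_adag_le_of_two_le {H : ℝ} (hH1 : H < 1) {k l : ℕ}
    (h : 2 ≤ |(k : ℝ) - l|) :
    |adag H k l| ≤ 2 ^ (3 - 2 * H) * |2 * H * (2 * H - 1) * (2 * H - 2)|
      * |(k : ℝ) - l| ^ (2 * H - 3) := by
  set n := |(k : ℝ) - l| with hn
  have habs : |adag H k l| = (1 / 2) * |trapezoidErrorRpowDiff (2 * H) (n - 1)| := by
    rcases abs_choice ((k : ℝ) - l) with h' | h'
    · rw [adag_of_sub_eq (h'.symm.trans hn.symm) (by linarith), abs_mul]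
      norm_num
    · rw [adag_of_sub_eq_neg (n := n) (by linarith) (by linarith), abs_mul]
      norm_num
  have hE := abs_trapezoidErrorRpowDiff_le (p := 2 * H) (a := n - 1) (by linarith) (by linarith)
  have hpow : (n - 1) ^ (2 * H - 3) ≤ 2 ^ (3 - 2 * H) * n ^ (2 * H - 3) := by
    calc (n - 1) ^ (2 * H - 3) ≤ (n / 2) ^ (2 * H - 3) :=
          Real.rpow_le_rpow_of_nonpos (by linarith) (by linarith) (by linarith)
      _ = 2 ^ (3 - 2 * H) * n ^ (2 * H - 3) := by
          rw [Real.div_rpow (by linarith) (by norm_num), div_eq_mul_inv,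
            ← Real.rpow_neg (by norm_num), neg_sub, mul_comm]
  calc |adag H k l| ≤ |trapezoidErrorRpowDiff (2 * H) (n - 1)| := by
        rw [habs]
        linarith [abs_nonneg (trapezoidErrorRpowDiff (2 * H) (n - 1))]
    _ ≤ _ := hE
    _ ≤ _ := mul_le_mul_of_nonneg_left hpow (abs_nonneg _)
    _ = _ := by ring

theorem adag_add (H : ℝ) (k l c : ℕ) : adag H (k + c) (l + c) = adag H k l := by
  have hD : ∀ s t u v : ℝ, DH H (s + c) (t + c) (u + c) (v + c) = DH H s t u v := by
    intro s t u v
    simp only [DH, add_sub_add_right_eq_sub]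
  simp only [adag, Nat.cast_add, add_sub_right_comm _ (c : ℝ), add_right_comm _ (c : ℝ), hD]

theorem stmt18 (H : ℝ) (hH0 : 0 < H) (hH1 : H < 1) :
    ∃ C : ℝ, 0 < C ∧
      ∀ k l : ℕ, 1 ≤ k → 1 ≤ l →
        (k ≠ l → |adag H k l| ≤ C * |(k:ℝ) - (l:ℝ)| ^ (2*H - 3)) ∧
        |adag H k k| ≤ C := by
  set K : ℝ := 2 ^ (3 - 2 * H) * |2 * H * (2 * H - 1) * (2 * H - 2)|
  have hK0 : 0 ≤ K := by positivity
  have h00 := abs_nonneg (adag H 0 0)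
  have h10 := abs_nonneg (adag H 1 0)
  have h01 := abs_nonneg (adag H 0 1)
  refine ⟨1 + K + |adag H 0 0| + |adag H 1 0| + |adag H 0 1|, by positivity,
    fun k l _ _ => ⟨fun hkl => ?_, ?_⟩⟩
  · have hcases : k = l + 1 ∨ l = k + 1 ∨ l + 2 ≤ k ∨ k + 2 ≤ l := by omega
    have hfar : 2 ≤ |(k : ℝ) - l| → |adag H k l| ≤
        (1 + K + |adag H 0 0| + |adag H 1 0| + |adag H 0 1|) * |(k : ℝ) - l| ^ (2 * H - 3) :=
      fun h => (abs_adag_le_of_two_le hH1 h).trans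
        (mul_le_mul_of_nonneg_right (by linarith) (by positivity))
    rcases hcases with rfl | rfl | h | h
    · have := adag_add H 1 0 l
      rw [zero_add, add_comm 1 l] at this
      rw [this]
      simp only [Nat.cast_add, Nat.cast_one, add_sub_cancel_left, abs_one, Real.one_rpow]
      linarith
    · have := adag_add H 0 1 k
      rw [zero_add, add_comm 1 k] at this
      rw [this]
      simp only [Nat.cast_add, Nat.cast_one, sub_add_cancel_left, abs_neg, abs_one, Real.one_rpow]
      linarith
    · have h' : (l : ℝ) + 2 ≤ k := by exact_mod_cast h
      exact hfar (le_abs.2 (Or.inl (by linarith)))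
    · have h' : (k : ℝ) + 2 ≤ l := by exact_mod_cast h
      exact hfar (le_abs.2 (Or.inr (by linarith)))
  · have := adag_add H 0 0 k
    rw [zero_add] at this
    rw [this]
    linarith
end

section
/- Let 0 < H < 1. Then for all integers k, l ≥ 1 one has the exact antisymmetry a†_{k,l} + a†_{l,k} = 0. -/
/-- Reversing the inner time in one of the two covariances makes their sum constant. -/
lemma DH_add_DH_reverse (H k l u : ℝ) :
    DH H (k - 1) k (l - 1) (l - 1 + u) + DH H (l - 1) l (k - 1) (k - 1 + (1 - u)) =
      DH H (k - 1) k (l - 1) l := by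
  unfold DH
  rw [abs_sub_comm l (k - 1), abs_sub_comm (l - 1) (k - 1 + (1 - u)),
    abs_sub_comm l (k - 1 + (1 - u)), abs_sub_comm (l - 1) (k - 1)]
  ring_nf

lemma DH_swap (H s t u v : ℝ) : DH H s t u v = DH H u v s t := by
  unfold DH
  rw [abs_sub_comm u t, abs_sub_comm v s, abs_sub_comm v t, abs_sub_comm u s]
  ring

lemma continuous_DH_right {H : ℝ} (hH : 0 < H) (s t u : ℝ) : Continuous (DH H s t u) := by
  have h : 0 ≤ 2 * H := by positivity
  unfold DH
  fun_prop (disch := exact h)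

theorem stmt19 (H : ℝ) (hH0 : 0 < H) (hH1 : H < 1) :
    ∀ k l : ℕ, 1 ≤ k → 1 ≤ l → adag H k l + adag H l k = 0 := by
  intro k l _ _
  have hint (s t u c : ℝ) (g : ℝ → ℝ) (hg : Continuous g) :
      IntervalIntegrable (fun x => DH H s t u (c + g x)) MeasureTheory.volume 0 1 :=
    ((continuous_DH_right hH0 s t u).comp (continuous_const.add hg)).intervalIntegrable 0 1
  have hrev : ∫ u in (0:ℝ)..1, DH H ((l:ℝ) - 1) l ((k:ℝ) - 1) ((k:ℝ) - 1 + (1 - u)) =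
      ∫ u in (0:ℝ)..1, DH H ((l:ℝ) - 1) l ((k:ℝ) - 1) ((k:ℝ) - 1 + u) := by
    simp
  have hsum := intervalIntegral.integral_add
    (hint ((k:ℝ) - 1) k ((l:ℝ) - 1) ((l:ℝ) - 1) id continuous_id)
    (hint ((l:ℝ) - 1) l ((k:ℝ) - 1) ((k:ℝ) - 1) (fun u => 1 - u) (by fun_prop))
  simp only [id_eq, DH_add_DH_reverse, hrev, intervalIntegral.integral_const, sub_zero,
    one_smul] at hsum
  unfold adag
  rw [DH_swap H ((l:ℝ) - 1) l ((k:ℝ) - 1) k]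
  linarith
end
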